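/- arXiv:2105.14084 — 3 statements merged into one kernel-verified Lean document; each statement's English description precedes it below -/
import Mathlib

section
/- There is a universal constant c > 0 such that the following holds. Let n, d be positive integers, λ ∈ ℝ^d with positive entries, and let (X, y) be a λ-anisotropic subgaussian sample of size n in dimension d with Gram matrix K = X Xᵀ. Then for any δ ∈ (0, 1/2), with probability at least 1 − δ, the operator norm satisfies ‖K − ‖λ‖₁ I_n‖ ≤ c ‖λ‖₁ ( √((n + log(1/δ))/d₂) + (n + log(1/δ))/d_∞ ). -/
open MeasureTheory ProbabilityTheory Matrix
open scoped Matrix.Norms.L2Operator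

noncomputable section

/-- `(X, y)` (with underlying matrix `Z` of independent, mean-zero, unit-variance,
1-subgaussian entries) is a `lam`-anisotropic subgaussian sample: `X = Z diag(lam)^{1/2}`. -/
structure IsAnisoSample {Ω : Type*} [MeasurableSpace Ω] (μ : Measure Ω)
    {n d : ℕ} (lam : Fin d → ℝ)
    (Z X : Ω → Matrix (Fin n) (Fin d) ℝ) (y : Fin n → ℝ) : Prop where
  lam_pos : ∀ j, 0 < lam j
  labels : ∀ i, y i = 1 ∨ y i = -1
  meas : ∀ i j, Measurable fun ω => Z ω i j
  indep : iIndepFun (fun (p : Fin n × Fin d) ω => Z ω p.1 p.2) μ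
  mean_zero : ∀ i j, ∫ ω, Z ω i j ∂μ = 0
  var_one : ∀ i j, ∫ ω, (Z ω i j) ^ 2 ∂μ = 1
  subg_int : ∀ i j (t : ℝ), Integrable (fun ω => Real.exp (t * Z ω i j)) μ
  subg : ∀ i j (t : ℝ), ∫ ω, Real.exp (t * Z ω i j) ∂μ ≤ Real.exp (t ^ 2 / 2)
  X_eq : ∀ ω i j, X ω i j = Real.sqrt (lam j) * Z ω i j

/-- ℓ₂ dimension proxy `d₂ = ‖λ‖₁²/‖λ‖₂²`. -/
def dim2 {d : ℕ} (lam : Fin d → ℝ) : ℝ := (∑ j, lam j) ^ 2 / ∑ j, (lam j) ^ 2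

/-- ℓ∞ dimension proxy `d∞ = ‖λ‖₁/‖λ‖∞`. -/
def dimInf {d : ℕ} (lam : Fin d → ℝ) : ℝ := (∑ j, lam j) / ⨆ j, lam j


lemma exists_half_net (n : ℕ) : ∃ s : Finset (EuclideanSpace ℝ (Fin n)),
    (s.card ≤ 5 ^ n) ∧ (∀ u ∈ s, ‖u‖ = 1) ∧
      ∀ x : EuclideanSpace ℝ (Fin n), ‖x‖ = 1 → ∃ u ∈ s, ‖x - u‖ ≤ 1 / 2 := by
  classical
  let P : ℕ → Prop := fun k => ∃ s : Finset (EuclideanSpace ℝ (Fin n)), s.card = k ∧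
    (∀ u ∈ s, ‖u‖ = 1) ∧ ∀ c ∈ s, ∀ d ∈ s, c ≠ d → 1 / 2 ≤ ‖c - d‖
  have hb : ∀ s : Finset (EuclideanSpace ℝ (Fin n)), (∀ u ∈ s, ‖u‖ = 1) →
      (∀ c ∈ s, ∀ d ∈ s, c ≠ d → 1 / 2 ≤ ‖c - d‖) → s.card ≤ 5 ^ n := by
    intro s h1 h2
    have inj : Function.Injective (fun x : EuclideanSpace ℝ (Fin n) => (2 : ℝ) • x) :=
      smul_right_injective _ (by norm_num)
    have := Besicovitch.card_le_of_separated (s.image (fun x => (2 : ℝ) • x)) ?_ ?_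
    · rwa [Finset.card_image_of_injective _ inj, finrank_euclideanSpace_fin] at this
    · intro c hc
      obtain ⟨x, hx, rfl⟩ := Finset.mem_image.1 hc
      simp [norm_smul, h1 x hx]
    · intro c hc d hd hcd
      obtain ⟨x, hx, rfl⟩ := Finset.mem_image.1 hc
      obtain ⟨y, hy, rfl⟩ := Finset.mem_image.1 hd
      have hxy : x ≠ y := fun h => hcd (by rw [h])
      have := h2 x hx y hy hxy
      simp only [← smul_sub, norm_smul, Real.norm_ofNat]
      linarith
  have h0 : P 0 := ⟨∅, by simp⟩
  have hP := Nat.findGreatest_spec (P := P) (Nat.zero_le (5 ^ n)) h0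
  obtain ⟨s, hs, h1, h2⟩ := hP
  refine ⟨s, hb s h1 h2, h1, fun x hx => ?_⟩
  by_contra! hcon
  have hxs : x ∉ s := fun h => by
    have := hcon x h
    simp at this
    linarith
  have g1 : ∀ u ∈ insert x s, ‖u‖ = 1 := by
    intro u hu
    rcases Finset.mem_insert.1 hu with rfl | hu
    exacts [hx, h1 u hu]
  have g2 : ∀ c ∈ insert x s, ∀ d ∈ insert x s, c ≠ d → 1 / 2 ≤ ‖c - d‖ := by
    intro c hc d hd hcd
    rcases Finset.mem_insert.1 hc with rfl | hc' <;> rcases Finset.mem_insert.1 hd with rfl | hd'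
    · exact absurd rfl hcd
    · exact (hcon d hd').le
    · rw [norm_sub_rev]; exact (hcon c hc').le
    · exact h2 c hc' d hd' hcd
  have := Nat.le_findGreatest (P := P) (hb _ g1 g2) ⟨_, rfl, g1, g2⟩
  rw [Finset.card_insert_of_notMem hxs] at this
  omega

lemma norm_le_of_net {n : ℕ} (s : Finset (EuclideanSpace ℝ (Fin n)))
    (hs1 : ∀ u ∈ s, ‖u‖ = 1)
    (hs : ∀ x : EuclideanSpace ℝ (Fin n), ‖x‖ = 1 → ∃ u ∈ s, ‖x - u‖ ≤ 1 / 2)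
    (A : Matrix (Fin n) (Fin n) ℝ) (hA : Aᵀ = A) (t : ℝ) (ht : 0 ≤ t)
    (h : ∀ u ∈ s, |u ⬝ᵥ A *ᵥ u| ≤ t) : ‖A‖ ≤ 32 * t := by
  set T := toEuclideanCLM (n := Fin n) (𝕜 := ℝ) A with hT
  have hn : ‖A‖ = ‖T‖ := (l2_opNorm_toEuclideanCLM A).symm
  have hsym : ∀ x y : EuclideanSpace ℝ (Fin n), inner ℝ (T x) y = inner ℝ x (T y) := by
    intro x y
    rw [real_inner_comm, inner_toEuclideanCLM, inner_toEuclideanCLM, Matrix.dotProduct_mulVec,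
      ← Matrix.mulVec_transpose, hA, dotProduct_comm]
  have key : ∀ x : EuclideanSpace ℝ (Fin n), ‖x‖ = 1 →
      |inner ℝ x (T x)| ≤ t + 31 / 32 * ‖T‖ := by
    intro x hx
    obtain ⟨u, hu, hxu⟩ := hs x hx
    have hu1 := hs1 u hu
    have e : inner ℝ x (T x) = inner ℝ u (T u) + inner ℝ (x - u) (T (x + u)) := by
      simp only [map_add, inner_add_right, inner_sub_left]
      rw [← hsym x u, real_inner_comm u (T x)]
      ring
    have hpar := parallelogram_law_with_norm ℝ x u
    have hb : ‖x - u‖ * ‖x + u‖ ≤ 31 / 32 := by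
      have h0 := norm_nonneg (x - u)
      rw [hx, hu1] at hpar
      apply abs_le_of_sq_le_sq' _ (by norm_num) |>.2
      have : ‖x + u‖ * ‖x + u‖ = 4 - ‖x - u‖ * ‖x - u‖ := by linarith
      have h4 : ‖x - u‖ * ‖x - u‖ ≤ 1 / 4 := by nlinarith
      have : (‖x - u‖ * ‖x + u‖) ^ 2 = (‖x - u‖ * ‖x - u‖) * (4 - ‖x - u‖ * ‖x - u‖) := by
        rw [← this]; ring
      rw [this]
      nlinarith [mul_self_nonneg ‖x - u‖]
    rw [e]
    refine (abs_add_le _ _).trans (add_le_add ?_ ?_)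
    · rw [inner_toEuclideanCLM]; exact h u hu
    · calc |inner ℝ (x - u) (T (x + u))| ≤ ‖x - u‖ * ‖T (x + u)‖ := abs_real_inner_le_norm _ _
        _ ≤ ‖x - u‖ * (‖T‖ * ‖x + u‖) := by gcongr; exact T.le_opNorm _
        _ = (‖x - u‖ * ‖x + u‖) * ‖T‖ := by ring
        _ ≤ _ := by gcongr
  have hfin : ‖T‖ ≤ t + 31 / 32 * ‖T‖ := by
    conv_lhs => rw [T.norm_eq_iSup_rayleighQuotient (fun x y => hsym x y)]
    apply ciSup_le
    intro x
    by_cases hx : x = 0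
    · subst hx
      simp
      positivity
    have hx' : 0 < ‖x‖ := norm_pos_iff.2 hx
    have := key (‖x‖⁻¹ • x) (by rw [norm_smul]; simp [hx'.ne'])
    have e2 : T.rayleighQuotient x = inner ℝ (‖x‖⁻¹ • x) (T (‖x‖⁻¹ • x)) := by
      simp only [ContinuousLinearMap.rayleighQuotient, ContinuousLinearMap.reApplyInnerSelf_apply,
        map_smul, inner_smul_left, inner_smul_right, real_inner_comm]
      simp
      field_simp
    rw [e2]; exact this
  rw [hn]; linarith


lemma lintegral_gauss_shift (w : ℝ) :
    ∫⁻ t : ℝ, ENNReal.ofReal (Real.exp (t * w - t ^ 2)) =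
      ENNReal.ofReal (√Real.pi * Real.exp (w ^ 2 / 4)) := by
  have e : ∀ t : ℝ, Real.exp (t * w - t ^ 2) =
      Real.exp (w ^ 2 / 4) * Real.exp (-1 * (t - w / 2) ^ 2) := by
    intro t; rw [← Real.exp_add]; congr 1; ring
  have hi : Integrable (fun t : ℝ => Real.exp (-1 * (t - w / 2) ^ 2)) :=
    (integrable_exp_neg_mul_sq one_pos).comp_sub_right (w / 2)
  simp_rw [e]
  rw [← ofReal_integral_eq_lintegral_ofReal (hi.const_mul _)
    (Filter.Eventually.of_forall fun t => by positivity), integral_const_mul,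
    integral_sub_right_eq_self (fun t : ℝ => Real.exp (-1 * t ^ 2)), integral_gaussian]
  simp [mul_comm]

lemma lintegral_exp_sq_le {Ω : Type*} [MeasurableSpace Ω] (μ : Measure Ω) [IsProbabilityMeasure μ]
    (W : Ω → ℝ) (hW : Measurable W) (hs : HasSubgaussianMGF W 1 μ) :
    ∫⁻ ω, ENNReal.ofReal (Real.exp (W ω ^ 2 / 4)) ∂μ ≤ 2 := by
  have hpi : 0 < √Real.pi := Real.sqrt_pos.2 Real.pi_pos
  have h1 : ENNReal.ofReal (√Real.pi) * ∫⁻ ω, ENNReal.ofReal (Real.exp (W ω ^ 2 / 4)) ∂μ ≤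
      ENNReal.ofReal (√Real.pi) * 2 := by
    rw [← lintegral_const_mul _ (by fun_prop)]
    simp_rw [← ENNReal.ofReal_mul hpi.le, ← lintegral_gauss_shift]
    rw [lintegral_lintegral_swap (by fun_prop)]
    calc ∫⁻ t : ℝ, ∫⁻ ω, ENNReal.ofReal (Real.exp (t * W ω - t ^ 2)) ∂μ
        ≤ ∫⁻ t : ℝ, ENNReal.ofReal (Real.exp (-(1 / 2) * t ^ 2)) := by
          apply lintegral_mono
          intro t
          have e : ∀ ω, Real.exp (t * W ω - t ^ 2) = Real.exp (-t ^ 2) * Real.exp (t * W ω) := by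
            intro ω; rw [← Real.exp_add]; congr 1; ring
          simp_rw [e]
          rw [← ofReal_integral_eq_lintegral_ofReal ((hs.integrable_exp_mul t).const_mul _)
            (Filter.Eventually.of_forall fun t => by positivity), integral_const_mul]
          apply ENNReal.ofReal_le_ofReal
          have := hs.mgf_le t
          rw [mgf] at this
          calc _ ≤ Real.exp (-t ^ 2) * Real.exp ((1 : NNReal) * t ^ 2 / 2) := by gcongr
            _ = _ := by rw [← Real.exp_add]; congr 1; push_cast; ring
      _ = ENNReal.ofReal (√(Real.pi / (1 / 2))) := by
          rw [← ofReal_integral_eq_lintegral_ofReal (integrable_exp_neg_mul_sq (by norm_num))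
            (Filter.Eventually.of_forall fun t => by positivity), integral_gaussian]
      _ ≤ ENNReal.ofReal (√Real.pi * 2) := by
          apply ENNReal.ofReal_le_ofReal
          rw [Real.sqrt_le_left (by positivity), mul_pow, Real.sq_sqrt Real.pi_pos.le]
          linarith [Real.pi_pos]
      _ = _ := by rw [ENNReal.ofReal_mul hpi.le]; simp
  exact (ENNReal.mul_le_mul_iff_right (by simpa using hpi) ENNReal.ofReal_ne_top).1 h1

lemma integrable_exp_sq {Ω : Type*} [MeasurableSpace Ω] (μ : Measure Ω) [IsProbabilityMeasure μ]
    (W : Ω → ℝ) (hW : Measurable W) (hs : HasSubgaussianMGF W 1 μ) :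
    Integrable (fun ω => Real.exp (W ω ^ 2 / 4)) μ ∧ ∫ ω, Real.exp (W ω ^ 2 / 4) ∂μ ≤ 2 := by
  have h := lintegral_exp_sq_le μ W hW hs
  have hm : Measurable (fun ω => Real.exp (W ω ^ 2 / 4)) := by fun_prop
  constructor
  · refine ⟨hm.aestronglyMeasurable, ?_⟩
    rw [hasFiniteIntegral_iff_ofReal (Filter.Eventually.of_forall fun t => by positivity)]
    exact h.trans_lt (by simp)
  · rw [integral_eq_lintegral_of_nonneg_ae (Filter.Eventually.of_forall fun t => by positivity)
      hm.aestronglyMeasurable]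
    exact ENNReal.toReal_le_of_le_ofReal (by norm_num) (by simpa using h)

lemma exp_le_quad (x : ℝ) : Real.exp x ≤ 1 + x + x ^ 2 * Real.exp |x| := by
  have := Complex.norm_exp_sub_sum_le_norm_mul_exp (x : ℂ) 2
  have e : Complex.exp (x : ℂ) - ∑ m ∈ Finset.range 2, (x : ℂ) ^ m / (m.factorial : ℂ) =
      ((Real.exp x - (1 + x) : ℝ) : ℂ) := by
    simp [Finset.sum_range_succ]
  rw [e, Complex.norm_real, Complex.norm_real, Real.norm_eq_abs, Real.norm_eq_abs, sq_abs] at this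
  linarith [le_abs_self (Real.exp x - (1 + x))]

lemma quad_ptwise (s w : ℝ) (hs : |s| ≤ 1 / 16) :
    (s * (w ^ 2 - 1)) ^ 2 * Real.exp |s * (w ^ 2 - 1)| ≤ 256 * s ^ 2 * Real.exp (w ^ 2 / 4) := by
  have hv : |w ^ 2 - 1| ≤ w ^ 2 + 1 := abs_le.2 ⟨by nlinarith, by nlinarith⟩
  have h1 : (w ^ 2 - 1) ^ 2 ≤ 128 * Real.exp ((w ^ 2 + 1) / 8) := by
    have := Real.quadratic_le_exp_of_nonneg (x := (w ^ 2 + 1) / 8) (by positivity)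
    have h3 : (w ^ 2 - 1) ^ 2 ≤ (w ^ 2 + 1) ^ 2 := by nlinarith [sq_nonneg w]
    nlinarith [sq_nonneg w]
  have h2 : |s * (w ^ 2 - 1)| ≤ (w ^ 2 + 1) / 16 := by
    rw [abs_mul]
    calc _ ≤ 1 / 16 * (w ^ 2 + 1) := by gcongr
      _ = _ := by ring
  have h5 : Real.exp (1 / 4) ≤ 2 := by
    have : (1 : ℝ) / 4 ≤ Real.log 2 := by linarith [Real.log_two_gt_d9]
    rw [← Real.exp_log (show (0 : ℝ) < 2 by norm_num)]
    exact Real.exp_le_exp.2 this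
  calc (s * (w ^ 2 - 1)) ^ 2 * Real.exp |s * (w ^ 2 - 1)|
      = s ^ 2 * ((w ^ 2 - 1) ^ 2 * Real.exp |s * (w ^ 2 - 1)|) := by ring
    _ ≤ s ^ 2 * ((128 * Real.exp ((w ^ 2 + 1) / 8)) * Real.exp ((w ^ 2 + 1) / 16)) := by
        gcongr
    _ = s ^ 2 * (128 * Real.exp ((w ^ 2 + 1) / 8 + (w ^ 2 + 1) / 16)) := by
        rw [Real.exp_add]; ring
    _ ≤ s ^ 2 * (128 * Real.exp (1 / 4 + w ^ 2 / 4)) := by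
        have h6 : (w ^ 2 + 1) / 8 + (w ^ 2 + 1) / 16 ≤ 1 / 4 + w ^ 2 / 4 := by
          nlinarith [sq_nonneg w]
        have := Real.exp_le_exp.2 h6
        gcongr
    _ ≤ s ^ 2 * (128 * (2 * Real.exp (w ^ 2 / 4))) := by
        rw [Real.exp_add]; gcongr
    _ = _ := by ring

lemma mgf_sq_sub_one {Ω : Type*} [MeasurableSpace Ω] (μ : Measure Ω) [IsProbabilityMeasure μ]
    (W : Ω → ℝ) (hW : Measurable W) (hs : HasSubgaussianMGF W 1 μ)
    (hv : ∫ ω, W ω ^ 2 ∂μ = 1) (s : ℝ) (hs' : |s| ≤ 1 / 16) :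
    Integrable (fun ω => Real.exp (s * (W ω ^ 2 - 1))) μ ∧
      ∫ ω, Real.exp (s * (W ω ^ 2 - 1)) ∂μ ≤ Real.exp (512 * s ^ 2) := by
  obtain ⟨hi, hle⟩ := integrable_exp_sq μ W hW hs
  have hW2 : Integrable (fun ω => W ω ^ 2) μ := (hs.memLp 2).integrable_sq
  have hb : ∀ ω, Real.exp (s * (W ω ^ 2 - 1)) ≤
      1 + s * (W ω ^ 2 - 1) + 256 * s ^ 2 * Real.exp (W ω ^ 2 / 4) := fun ω =>
    (exp_le_quad _).trans (by linarith [quad_ptwise s (W ω) hs'])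
  have hI0 : Integrable (fun ω => s * (W ω ^ 2 - 1)) μ :=
    (hW2.sub (integrable_const _)).const_mul s
  have hI1 : Integrable (fun ω => 1 + s * (W ω ^ 2 - 1)) μ :=
    (integrable_const _).add ((hW2.sub (integrable_const _)).const_mul s)
  have hI2 : Integrable (fun ω => 256 * s ^ 2 * Real.exp (W ω ^ 2 / 4)) μ := hi.const_mul _
  have hI := hI1.add hI2
  have hint : Integrable (fun ω => Real.exp (s * (W ω ^ 2 - 1))) μ := by
    refine hI.mono' (by fun_prop) (Filter.Eventually.of_forall fun ω => ?_)
    rw [Real.norm_eq_abs, Real.abs_exp]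
    exact hb ω
  refine ⟨hint, ?_⟩
  calc _ ≤ ∫ ω, (1 + s * (W ω ^ 2 - 1) + 256 * s ^ 2 * Real.exp (W ω ^ 2 / 4)) ∂μ :=
        integral_mono hint hI hb
    _ = 1 + 256 * s ^ 2 * ∫ ω, Real.exp (W ω ^ 2 / 4) ∂μ := by
        rw [integral_add hI1 hI2, integral_add (integrable_const _) hI0, integral_const_mul, integral_const_mul,
          integral_sub hW2 (integrable_const _), hv]
        simp
    _ ≤ 512 * s ^ 2 + 1 := by nlinarith [sq_nonneg s]
    _ ≤ _ := Real.add_one_le_exp _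

lemma iIndepFun_block {Ω : Type*} [MeasurableSpace Ω] {μ : Measure Ω} [IsProbabilityMeasure μ]
    {n d : ℕ} {Z : Ω → Matrix (Fin n) (Fin d) ℝ} (hm : ∀ i j, Measurable fun ω => Z ω i j)
    (h : iIndepFun (fun (p : Fin n × Fin d) ω => Z ω p.1 p.2) μ) :
    iIndepFun (fun (j : Fin d) ω => (fun i : Fin n => Z ω i j)) μ := by
  have h' : iIndepFun (fun (p : (_ : Fin d) × Fin n) ω => Z ω p.2 p.1) μ :=
    h.precomp (g := fun p : (_ : Fin d) × Fin n => ((p.2, p.1) : Fin n × Fin d)) (by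
      rintro ⟨a, b⟩ ⟨c, e⟩ hab
      simp only [Prod.mk.injEq] at hab
      obtain ⟨rfl, rfl⟩ := hab
      rfl)
  have h2 : ∀ j : Fin d, iIndepFun (fun (i : Fin n) ω => Z ω i j) μ := fun j =>
    h.precomp (g := fun i : Fin n => ((i, j) : Fin n × Fin d)) (by
      intro a b hab; simpa using hab)
  have hp : ∀ (j : Fin d) (i : Fin n), IsProbabilityMeasure (μ.map (fun ω => Z ω i j)) :=
    fun j i => Measure.isProbabilityMeasure_map (hm i j).aemeasurable
  have e : (MeasurableEquiv.piCurry (fun (_ : Fin d) (_ : Fin n) => ℝ)) ∘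
      (fun ω (p : (_ : Fin d) × Fin n) => Z ω p.2 p.1) = fun ω j i => Z ω i j := by
    ext; simp [Sigma.curry]
  rw [iIndepFun_iff_map_fun_eq_infinitePi_map (by fun_prop)] at h' ⊢
  rw [← e, ← Measure.map_map (by fun_prop) (by fun_prop), h',
    Measure.infinitePi_map_piCurry (fun (j : Fin d) (i : Fin n) => μ.map (fun ω => Z ω i j))]
  congr 1
  funext j
  rw [(iIndepFun_iff_map_fun_eq_infinitePi_map (by fun_prop)).1 (h2 j)]

lemma col_props {Ω : Type*} [MeasurableSpace Ω] {μ : Measure Ω} [IsProbabilityMeasure μ]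
    {n d : ℕ} {lam : Fin d → ℝ} {Z X : Ω → Matrix (Fin n) (Fin d) ℝ} {y : Fin n → ℝ}
    (h : IsAnisoSample μ lam Z X y) (u : EuclideanSpace ℝ (Fin n)) (hu : ‖u‖ = 1) (j : Fin d) :
    HasSubgaussianMGF (fun ω => ∑ i, u i * Z ω i j) 1 μ ∧
      ∫ ω, (∑ i, u i * Z ω i j) ^ 2 ∂μ = 1 := by
  have hu2 : ∑ i, u i ^ 2 = 1 := by
    rw [← EuclideanSpace.real_norm_sq_eq, hu]; norm_num
  have hZ : ∀ i, HasSubgaussianMGF (fun ω => Z ω i j) 1 μ := fun i =>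
    ⟨h.subg_int i j, fun t => by simpa [mgf] using h.subg i j t⟩
  have h2 : iIndepFun (fun (i : Fin n) ω => Z ω i j) μ :=
    h.indep.precomp (g := fun i : Fin n => ((i, j) : Fin n × Fin d)) (by
      intro a b hab; simpa using hab)
  have h3 : iIndepFun (fun (i : Fin n) ω => u i * Z ω i j) μ :=
    h2.comp (fun i x => u i * x) (fun i => by fun_prop)
  have hs := HasSubgaussianMGF.sum_of_iIndepFun h3 (s := Finset.univ)
    (fun i _ => (hZ i).const_mul (u i))
  have hc : (∑ i, (⟨u i ^ 2, sq_nonneg (u i)⟩ * 1 : NNReal)) = 1 := by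
    apply NNReal.coe_injective
    rw [NNReal.coe_sum]
    refine Eq.trans (Finset.sum_congr rfl fun i _ => ?_) hu2
    exact mul_one (u i ^ 2)
  rw [hc] at hs
  refine ⟨hs, ?_⟩
  have hmem : ∀ i, MemLp (fun ω => u i * Z ω i j) 2 μ := fun i => ((hZ i).const_mul (u i)).memLp 2
  have hmean : ∫ ω, ∑ i, u i * Z ω i j ∂μ = 0 := by
    rw [integral_finsetSum _ (fun i _ => (hmem i).integrable (by norm_num))]
    simp [integral_const_mul, h.mean_zero]
  have hv := IndepFun.variance_sum (X := fun i ω => u i * Z ω i j) (s := Finset.univ) (μ := μ)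
    (fun i _ => hmem i) (fun a _ b _ hab => h3.indepFun hab)
  have e1 : ∀ i, variance (fun ω => u i * Z ω i j) μ = u i ^ 2 := by
    intro i
    rw [variance_const_mul, variance_of_integral_eq_zero (h.meas i j).aemeasurable
      (h.mean_zero i j), h.var_one i j, mul_one]
  simp_rw [e1, hu2] at hv
  have e2 : (∑ i, fun ω => u i * Z ω i j) = fun ω => ∑ i, u i * Z ω i j := by
    ext ω; simp
  rw [e2, variance_of_integral_eq_zero hs.aemeasurable hmean] at hv
  exact hv

lemma mgf_quad {Ω : Type*} [MeasurableSpace Ω] {μ : Measure Ω} [IsProbabilityMeasure μ]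
    {n d : ℕ} {lam : Fin d → ℝ} {Z X : Ω → Matrix (Fin n) (Fin d) ℝ} {y : Fin n → ℝ}
    (h : IsAnisoSample μ lam Z X y) (u : EuclideanSpace ℝ (Fin n)) (hu : ‖u‖ = 1)
    (s : ℝ) (hs : ∀ j, |s * lam j| ≤ 1 / 16) :
    Integrable (fun ω => Real.exp (s * ∑ j, lam j * ((∑ i, u i * Z ω i j) ^ 2 - 1))) μ ∧
      mgf (fun ω => ∑ j, lam j * ((∑ i, u i * Z ω i j) ^ 2 - 1)) μ s ≤
        Real.exp (512 * s ^ 2 * ∑ j, lam j ^ 2) := by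
  have hmZ := h.meas
  have hind : iIndepFun (fun (j : Fin d) ω => lam j * ((∑ i, u i * Z ω i j) ^ 2 - 1)) μ :=
    (iIndepFun_block h.meas h.indep).comp
      (fun j (z : Fin n → ℝ) => lam j * ((∑ i, u i * z i) ^ 2 - 1)) (fun j => by fun_prop)
  have hmeas : ∀ j, Measurable (fun ω => lam j * ((∑ i, u i * Z ω i j) ^ 2 - 1)) :=
    fun j => by fun_prop
  have hj : ∀ j, Integrable (fun ω => Real.exp (s * (lam j * ((∑ i, u i * Z ω i j) ^ 2 - 1)))) μ ∧
      mgf (fun ω => lam j * ((∑ i, u i * Z ω i j) ^ 2 - 1)) μ s ≤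
        Real.exp (512 * (s * lam j) ^ 2) := by
    intro j
    obtain ⟨p1, p2⟩ := col_props h u hu j
    have := mgf_sq_sub_one μ _ (by fun_prop) p1 p2 (s * lam j) (hs j)
    simpa only [mgf, mul_assoc] using this
  have e2 : (∑ j, fun ω => lam j * ((∑ i, u i * Z ω i j) ^ 2 - 1)) =
      fun ω => ∑ j, lam j * ((∑ i, u i * Z ω i j) ^ 2 - 1) := by
    ext ω; simp
  have hi := hind.integrable_exp_mul_sum hmeas (s := Finset.univ) (t := s) (fun j _ => (hj j).1)
  have hm := hind.mgf_sum hmeas (t := s) Finset.univ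
  rw [e2] at hi hm
  refine ⟨hi, ?_⟩
  rw [hm]
  calc _ ≤ ∏ j, Real.exp (512 * (s * lam j) ^ 2) :=
        Finset.prod_le_prod (fun j _ => mgf_nonneg) (fun j _ => (hj j).2)
    _ = _ := by
        rw [← Real.exp_sum, Finset.mul_sum]
        congr 1
        exact Finset.sum_congr rfl fun j _ => by ring

lemma tail_quad {Ω : Type*} [MeasurableSpace Ω] {μ : Measure Ω} [IsProbabilityMeasure μ]
    {n d : ℕ} {lam : Fin d → ℝ} {Z X : Ω → Matrix (Fin n) (Fin d) ℝ} {y : Fin n → ℝ}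
    (h : IsAnisoSample μ lam Z X y) (u : EuclideanSpace ℝ (Fin n)) (hu : ‖u‖ = 1)
    (M N L : ℝ) (hM : 0 < M) (hlM : ∀ j, lam j ≤ M) (hN : N = ∑ j, lam j ^ 2) (hN0 : 0 < N)
    (hL : 0 < L) :
    μ {ω | 8240 * (√(L * N) + L * M) ≤ |∑ j, lam j * ((∑ i, u i * Z ω i j) ^ 2 - 1)|} ≤
      ENNReal.ofReal (2 * Real.exp (-3 * L)) := by
  set Q : Ω → ℝ := fun ω => ∑ j, lam j * ((∑ i, u i * Z ω i j) ^ 2 - 1) with hQ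
  set t := 8240 * (√(L * N) + L * M) with ht
  obtain ⟨s, hs0, hs1, hs2, hs3⟩ : ∃ s : ℝ, 0 ≤ s ∧ s * M ≤ 1 / 16 ∧ s ^ 2 * N ≤ L ∧
      515 * L ≤ s * t := by
    have hLN : √(L * N) = √L * √N := Real.sqrt_mul hL.le N
    have hl : √L * √L = L := Real.mul_self_sqrt hL.le
    have hn : √N * √N = N := Real.mul_self_sqrt hN0.le
    have hl0 : 0 < √L := Real.sqrt_pos.2 hL
    have hn0 : 0 < √N := Real.sqrt_pos.2 hN0
    rcases le_total (√L / √N) (1 / (16 * M)) with hc | hc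
    · refine ⟨√L / √N, by positivity, ?_, ?_, ?_⟩
      · rw [le_div_iff₀ (by positivity)] at hc
        linarith
      · rw [div_pow, sq, sq, hl, hn]; field_simp; rfl
      · have : √L / √N * √(L * N) = L := by rw [hLN]; field_simp; linarith
        have h5 : 0 ≤ √L / √N * (L * M) := by positivity
        rw [ht]; nlinarith
    · refine ⟨1 / (16 * M), by positivity, ?_, ?_, ?_⟩
      · apply le_of_eq; field_simp
      · calc (1 / (16 * M)) ^ 2 * N ≤ (√L / √N) ^ 2 * N := by gcongr
          _ = L := by rw [div_pow, sq, sq, hl, hn]; field_simp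
      · have : 1 / (16 * M) * (L * M) = L / 16 := by field_simp
        have h5 : 0 ≤ 1 / (16 * M) * √(L * N) := by positivity
        rw [ht]; nlinarith
  have habs : ∀ j, |s * lam j| ≤ 1 / 16 := by
    intro j
    rw [abs_of_nonneg (mul_nonneg hs0 (h.lam_pos j).le)]
    exact (mul_le_mul_of_nonneg_left (hlM j) hs0).trans hs1
  obtain ⟨i1, m1⟩ := mgf_quad h u hu s habs
  obtain ⟨i2, m2⟩ := mgf_quad h u hu (-s) (fun j => by rw [neg_mul, abs_neg]; exact habs j)
  have b1 : μ.real {ω | t ≤ Q ω} ≤ Real.exp (-3 * L) := by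
    refine (measure_ge_le_exp_mul_mgf t hs0 i1).trans ?_
    refine (mul_le_mul_of_nonneg_left m1 (Real.exp_pos _).le).trans ?_
    rw [← Real.exp_add, ← hN]
    apply Real.exp_le_exp.2
    nlinarith
  have b2 : μ.real {ω | Q ω ≤ -t} ≤ Real.exp (-3 * L) := by
    refine (measure_le_le_exp_mul_mgf (-t) (neg_nonpos.2 hs0) i2).trans ?_
    refine (mul_le_mul_of_nonneg_left m2 (Real.exp_pos _).le).trans ?_
    rw [← Real.exp_add, ← hN]
    apply Real.exp_le_exp.2
    nlinarith
  have hsub : {ω | t ≤ |Q ω|} ⊆ {ω | t ≤ Q ω} ∪ {ω | Q ω ≤ -t} := by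
    intro ω hω
    rcases le_abs.1 (show t ≤ |Q ω| from hω) with h1 | h1
    · exact Or.inl h1
    · exact Or.inr (show Q ω ≤ -t by linarith)
  have hfin : μ.real {ω | t ≤ |Q ω|} ≤ 2 * Real.exp (-3 * L) := by
    have := (measureReal_mono (μ := μ) hsub).trans (measureReal_union_le _ _)
    linarith
  rw [← ofReal_measureReal]
  exact ENNReal.ofReal_le_ofReal hfin

lemma quad_form {n d : ℕ} {lam : Fin d → ℝ} (hl : ∀ j, 0 < lam j)
    (Z X : Matrix (Fin n) (Fin d) ℝ) (hX : ∀ i j, X i j = Real.sqrt (lam j) * Z i j)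
    (u : EuclideanSpace ℝ (Fin n)) (hu : ‖u‖ = 1) :
    u ⬝ᵥ (X * Xᵀ - (∑ j, lam j) • (1 : Matrix (Fin n) (Fin n) ℝ)) *ᵥ u =
      ∑ j, lam j * ((∑ i, u i * Z i j) ^ 2 - 1) := by
  have hu2 : (u : Fin n → ℝ) ⬝ᵥ u = 1 := by
    have : ∑ i, u i ^ 2 = 1 := by
      rw [← EuclideanSpace.real_norm_sq_eq, hu]; norm_num
    simpa [dotProduct, sq] using this
  rw [Matrix.sub_mulVec, dotProduct_sub, Matrix.smul_mulVec, Matrix.one_mulVec, dotProduct_smul,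
    hu2, ← Matrix.mulVec_mulVec, Matrix.dotProduct_mulVec, Matrix.mulVec_transpose]
  simp only [mul_sub, Finset.sum_sub_distrib, mul_one, smul_eq_mul, sub_left_inj]
  rw [dotProduct]
  apply Finset.sum_congr rfl
  intro j _
  have : (u ᵥ* X) j = √(lam j) * ∑ i, u i * Z i j := by
    rw [Matrix.vecMul, dotProduct, Finset.mul_sum]
    exact Finset.sum_congr rfl fun i _ => by rw [hX]; ring
  rw [this]
  calc _ = (√(lam j) * √(lam j)) * (∑ i, u i * Z i j) ^ 2 := by ring
    _ = _ := by rw [Real.mul_self_sqrt (hl j).le]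

/-- Concentration of the Gram matrix of an anisotropic subgaussian sample around `‖λ‖₁ I`,
in ℓ₂ operator norm. -/
theorem stmt4 :
    ∃ c > (0 : ℝ),
      ∀ (Ω : Type*) (_ : MeasurableSpace Ω) (μ : Measure Ω), IsProbabilityMeasure μ →
      ∀ (n d : ℕ), 0 < n → 0 < d →
      ∀ (lam : Fin d → ℝ) (Z X : Ω → Matrix (Fin n) (Fin d) ℝ) (y : Fin n → ℝ),
        IsAnisoSample μ lam Z X y →
      ∀ δ : ℝ, 0 < δ → δ < 1 / 2 →
        ENNReal.ofReal (1 - δ) ≤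
          μ {ω | ‖X ω * (X ω)ᵀ - (∑ j, lam j) • (1 : Matrix (Fin n) (Fin n) ℝ)‖ ≤
              c * (∑ j, lam j) *
                (Real.sqrt ((n + Real.log (1 / δ)) / dim2 lam) +
                  (n + Real.log (1 / δ)) / dimInf lam)} := by
  refine ⟨32 * 8240, by norm_num, ?_⟩
  intro Ω _ μ hμ n d hn hd lam Z X y h δ hδ hδ2
  have : Nonempty (Fin d) := ⟨⟨0, hd⟩⟩
  set S := ∑ j, lam j with hS
  set N := ∑ j, lam j ^ 2 with hN
  set M := ⨆ j, lam j with hM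
  set L : ℝ := n + Real.log (1 / δ) with hL
  have hlM : ∀ j, lam j ≤ M := fun j => le_ciSup (Set.finite_range lam).bddAbove j
  have hM0 : 0 < M := (h.lam_pos ⟨0, hd⟩).trans_le (hlM _)
  have hS0 : 0 < S := Finset.sum_pos (fun j _ => h.lam_pos j) Finset.univ_nonempty
  have hN0 : 0 < N := Finset.sum_pos (fun j _ => pow_pos (h.lam_pos j) 2) Finset.univ_nonempty
  have hlog : 0 < Real.log (1 / δ) := Real.log_pos (by rw [lt_div_iff₀ hδ]; linarith)
  have hn1 : (1 : ℝ) ≤ n := by exact_mod_cast hn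
  have hL0 : 0 < L := by positivity
  have eR : 32 * 8240 * S * (√(L / dim2 lam) + L / dimInf lam) =
      32 * (8240 * (√(L * N) + L * M)) := by
    have e1 : L / dim2 lam = L * N / S ^ 2 := by
      rw [dim2, ← hS, ← hN, div_div_eq_mul_div]
    have e2 : L / dimInf lam = L * M / S := by
      rw [dimInf, ← hS, ← hM, div_div_eq_mul_div]
    rw [e1, e2, Real.sqrt_div (by positivity), Real.sqrt_sq hS0.le]
    field_simp
  rw [eR]
  set t := 8240 * (√(L * N) + L * M) with ht
  have ht0 : 0 ≤ t := by positivity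
  obtain ⟨s, hcard, hs1, hnet⟩ := exists_half_net n
  set G := {ω | ‖X ω * (X ω)ᵀ - S • (1 : Matrix (Fin n) (Fin n) ℝ)‖ ≤ 32 * t} with hG
  set B : EuclideanSpace ℝ (Fin n) → Set Ω :=
    fun u => {ω | t ≤ |∑ j, lam j * ((∑ i, u i * Z ω i j) ^ 2 - 1)|} with hB
  have hcov : Set.univ ⊆ G ∪ ⋃ u ∈ s, B u := by
    intro ω _
    by_cases hω : ω ∈ ⋃ u ∈ s, B u
    · exact Or.inr hω
    · left
      simp only [Set.mem_iUnion, not_exists] at hω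
      apply norm_le_of_net s hs1 hnet _ _ t ht0
      · intro u hu
        rw [quad_form h.lam_pos (Z ω) (X ω) (h.X_eq ω) u (hs1 u hu)]
        exact (not_le.1 (hω u hu)).le
      · simp [Matrix.transpose_sub, Matrix.transpose_mul]
  have hbad : μ (⋃ u ∈ s, B u) ≤ ENNReal.ofReal δ := by
    calc μ (⋃ u ∈ s, B u) ≤ ∑ u ∈ s, μ (B u) := measure_biUnion_finset_le _ _
      _ ≤ ∑ u ∈ s, ENNReal.ofReal (2 * Real.exp (-3 * L)) :=
          Finset.sum_le_sum fun u hu =>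
            tail_quad h u (hs1 u hu) M N L hM0 hlM hN hN0 hL0
      _ = ENNReal.ofReal (s.card * (2 * Real.exp (-3 * L))) := by
          rw [Finset.sum_const, nsmul_eq_mul, ENNReal.ofReal_mul (Nat.cast_nonneg _),
            ENNReal.ofReal_natCast]
      _ ≤ ENNReal.ofReal δ := by
          apply ENNReal.ofReal_le_ofReal
          have hc : (s.card : ℝ) ≤ 5 ^ n := by exact_mod_cast hcard
          have h10 : (5 : ℝ) ^ n * 2 ≤ Real.exp (3 * n) := by
            have h2 : (2 : ℝ) ≤ 2 ^ n := by
              simpa using pow_le_pow_right₀ (show (1 : ℝ) ≤ 2 by norm_num) hn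
            have h3 : (10 : ℝ) ≤ Real.exp 3 := by
              have h27 := Real.exp_one_gt_d9
              have : Real.exp 3 = Real.exp 1 ^ 3 := by rw [← Real.exp_nat_mul]; norm_num
              rw [this]
              calc (10 : ℝ) ≤ 2.7 ^ 3 := by norm_num
                _ ≤ _ := by gcongr; linarith
            calc (5 : ℝ) ^ n * 2 ≤ 5 ^ n * 2 ^ n := by gcongr
              _ = 10 ^ n := by rw [← mul_pow]; norm_num
              _ ≤ Real.exp 3 ^ n := by gcongr
              _ = _ := by rw [← Real.exp_nat_mul]; congr 1; ring
          calc (s.card : ℝ) * (2 * Real.exp (-3 * L)) ≤ 5 ^ n * (2 * Real.exp (-3 * L)) := by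
                gcongr
            _ = 5 ^ n * 2 * Real.exp (-3 * L) := by ring
            _ ≤ Real.exp (3 * n) * Real.exp (-3 * L) := by gcongr
            _ = Real.exp (-3 * Real.log (1 / δ)) := by
                rw [← Real.exp_add, hL]; congr 1; ring
            _ ≤ Real.exp (-Real.log (1 / δ)) := Real.exp_le_exp.2 (by linarith)
            _ = δ := by rw [one_div, Real.log_inv, neg_neg, Real.exp_log hδ]
  have htot : (1 : ENNReal) ≤ μ G + ENNReal.ofReal δ := by
    calc (1 : ENNReal) = μ Set.univ := measure_univ.symm
      _ ≤ μ (G ∪ ⋃ u ∈ s, B u) := measure_mono hcov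
      _ ≤ μ G + μ (⋃ u ∈ s, B u) := measure_union_le _ _
      _ ≤ _ := by gcongr
  rw [ENNReal.ofReal_sub _ hδ.le, ENNReal.ofReal_one]
  exact tsub_le_iff_right.2 htot

end
end

section
/- There are universal constants c > 0 and c₃ > 0 such that the following holds. Let n, d be positive integers, λ ∈ ℝ^d with positive entries, and let (X, y) be a λ-anisotropic subgaussian sample of size n in dimension d with Gram matrix K = X Xᵀ. If d_∞ ≥ c₃ (n + log(1/δ)) for δ ∈ (0, 1/2), then with probability at least 1 − δ, K is invertible and the operator norm satisfies ‖K⁻¹ − ‖λ‖₁⁻¹ I_n‖ ≤ (c/‖λ‖₁) ( √((n + log(1/δ))/d₂) + (n + log(1/δ))/d_∞ ). -/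
open MeasureTheory ProbabilityTheory Matrix
open scoped Matrix.Norms.L2Operator

noncomputable section

lemma gauss_sq_integrable :
    Integrable (fun g : ℝ => Real.exp (g ^ 2 / 2)) (gaussianReal 0 (1/2)) := by
  have hv : (1/2 : NNReal) ≠ 0 := by norm_num
  rw [gaussianReal_of_var_ne_zero _ hv, integrable_withDensity_iff_integrable_smul'
    (measurable_gaussianPDF _ _) (ae_of_all _ fun _ => gaussianPDF_lt_top)]
  have h := (integrable_exp_neg_mul_sq (b := 1/2) (by norm_num)).const_mul
    ((Real.sqrt (2 * Real.pi * (1/2 : NNReal)))⁻¹)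
  refine h.congr (ae_of_all _ fun g => ?_)
  simp only [toReal_gaussianPDF, gaussianPDFReal, smul_eq_mul]
  rw [mul_assoc (_⁻¹) (Real.exp _) (Real.exp _), ← Real.exp_add]
  congr 2
  push_cast
  ring

/-- Universal bound for `E exp(W²/4)`. -/
def subgM : ℝ := ∫ g : ℝ, Real.exp (g ^ 2 / 2) ∂(gaussianReal 0 (1/2))

lemma subgM_nonneg : 0 ≤ subgM := integral_nonneg fun _ => (Real.exp_pos _).le

lemma exp_sq_gauss (x : ℝ) : ENNReal.ofReal (Real.exp (x ^ 2 / 4)) =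
    ∫⁻ g : ℝ, ENNReal.ofReal (Real.exp (x * g)) ∂(gaussianReal 0 (1/2)) := by
  rw [← ofReal_integral_eq_lintegral_ofReal (integrable_exp_mul_gaussianReal x)
    (ae_of_all _ fun _ => (Real.exp_pos _).le)]
  have := congrFun (mgf_fun_id_gaussianReal (μ := 0) (v := 1/2)) x
  rw [mgf] at this
  rw [this]
  congr 2
  push_cast
  ring

lemma exp_sq_bound {Ω : Type*} [MeasurableSpace Ω] (μ : Measure Ω) [IsProbabilityMeasure μ]
    (W : Ω → ℝ) (hW : Measurable W)
    (hi : ∀ t : ℝ, Integrable (fun ω => Real.exp (t * W ω)) μ)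
    (hb : ∀ t : ℝ, ∫ ω, Real.exp (t * W ω) ∂μ ≤ Real.exp (t ^ 2 / 2)) :
    Integrable (fun ω => Real.exp (W ω ^ 2 / 4)) μ ∧
      ∫ ω, Real.exp (W ω ^ 2 / 4) ∂μ ≤ subgM := by
  have key : ∫⁻ ω, ENNReal.ofReal (Real.exp (W ω ^ 2 / 4)) ∂μ ≤ ENNReal.ofReal subgM := by
    simp_rw [exp_sq_gauss]
    rw [lintegral_lintegral_swap (by fun_prop), subgM, ofReal_integral_eq_lintegral_ofReal
      gauss_sq_integrable (ae_of_all _ fun _ => (Real.exp_pos _).le)]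
    refine lintegral_mono fun g => ?_
    simp only [mul_comm (W _) g]
    rw [← ofReal_integral_eq_lintegral_ofReal (hi g)
      (ae_of_all _ fun _ => (Real.exp_pos _).le)]
    exact ENNReal.ofReal_le_ofReal (hb g)
  have hint : Integrable (fun ω => Real.exp (W ω ^ 2 / 4)) μ := by
    refine ⟨by fun_prop, ?_⟩
    rw [hasFiniteIntegral_iff_ofReal (ae_of_all _ fun _ => (Real.exp_pos _).le)]
    exact key.trans_lt ENNReal.ofReal_lt_top
  refine ⟨hint, ?_⟩
  rw [← ofReal_integral_eq_lintegral_ofReal hint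
      (ae_of_all _ fun _ => (Real.exp_pos _).le)] at key
  exact (ENNReal.ofReal_le_ofReal_iff subgM_nonneg).1 key

lemma exp_scalar (t w : ℝ) (ht : |t| ≤ 1 / 8) :
    Real.exp (t * (w ^ 2 - 1)) ≤ 1 + t * (w ^ 2 - 1) + 256 * t ^ 2 * Real.exp (w ^ 2 / 4) := by
  set u := w ^ 2 - 1 with hu
  have h1 : |Real.exp (t * u) - (1 + t * u)| ≤ |t * u| ^ 2 * Real.exp |t * u| := by
    have := Complex.norm_exp_sub_sum_le_norm_mul_exp ((t * u : ℝ) : ℂ) 2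
    simp only [Finset.sum_range_succ, Finset.range_zero, Finset.sum_empty, Complex.norm_real,
      Real.norm_eq_abs, pow_zero, pow_one, Nat.factorial, Nat.cast_one, div_one, zero_add,
      mul_one] at this
    rw [← Complex.ofReal_exp] at this
    have e : ((Real.exp (t * u) : ℝ) : ℂ) - (1 + ((t * u : ℝ) : ℂ)) =
      ((Real.exp (t * u) - (1 + t * u) : ℝ) : ℂ) := by push_cast; ring
    rw [e, Complex.norm_real] at this
    exact this
  have h2 := (abs_le.1 h1).2
  have h3 : |t * u| ≤ |u| / 8 := by
    rw [abs_mul]; nlinarith [abs_nonneg u]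
  have h4 : u ^ 2 ≤ 128 * Real.exp (|u| / 8) := by
    have := Real.quadratic_le_exp_of_nonneg (x := |u| / 8) (by positivity)
    have e : |u| ^ 2 = u ^ 2 := sq_abs u
    nlinarith [abs_nonneg u]
  have h5 : Real.exp (|u| / 4) ≤ 2 * Real.exp (w ^ 2 / 4) := by
    have : |u| ≤ w ^ 2 + 1 := by
      rw [abs_le]; constructor <;> nlinarith [sq_nonneg w]
    have h6 : Real.exp (1/4) ≤ 2 := by
      have := Real.exp_one_lt_d9
      have e : Real.exp (1/4) ^ 4 = Real.exp 1 := by rw [← Real.exp_nat_mul]; norm_num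
      by_contra hc
      push Not at hc
      have : (2:ℝ)^4 < Real.exp (1/4) ^ 4 := by gcongr
      linarith
    calc Real.exp (|u| / 4) ≤ Real.exp (1/4 + w ^ 2 / 4) := by
          apply Real.exp_le_exp.2; linarith
      _ = Real.exp (1/4) * Real.exp (w ^ 2 / 4) := Real.exp_add _ _
      _ ≤ _ := by gcongr
  have h7 : |t * u| ^ 2 * Real.exp |t * u| ≤ t ^ 2 * (128 * Real.exp (|u| / 8)) * Real.exp (|u| / 8) := by
    rw [sq_abs, mul_pow]
    gcongr
  have h8 : Real.exp (|u| / 8) * Real.exp (|u| / 8) = Real.exp (|u| / 4) := by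
    rw [← Real.exp_add]; congr 1; ring
  have h9 : t ^ 2 * (128 * Real.exp (|u| / 8)) * Real.exp (|u| / 8) ≤
      256 * t ^ 2 * Real.exp (w ^ 2 / 4) := by
    calc _ = 128 * t ^ 2 * (Real.exp (|u| / 8) * Real.exp (|u| / 8)) := by ring
      _ = 128 * t ^ 2 * Real.exp (|u| / 4) := by rw [h8]
      _ ≤ 128 * t ^ 2 * (2 * Real.exp (w ^ 2 / 4)) := by gcongr
      _ = _ := by ring
  linarith

lemma mgf_sq_bound {Ω : Type*} [MeasurableSpace Ω] (μ : Measure Ω) [IsProbabilityMeasure μ]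
    (W : Ω → ℝ) (hW : Measurable W)
    (hi : ∀ t : ℝ, Integrable (fun ω => Real.exp (t * W ω)) μ)
    (hb : ∀ t : ℝ, ∫ ω, Real.exp (t * W ω) ∂μ ≤ Real.exp (t ^ 2 / 2))
    (h2i : Integrable (fun ω => W ω ^ 2) μ)
    (h2 : ∫ ω, W ω ^ 2 ∂μ = 1) (t : ℝ) (ht : |t| ≤ 1 / 8) :
    Integrable (fun ω => Real.exp (t * (W ω ^ 2 - 1))) μ ∧
      ∫ ω, Real.exp (t * (W ω ^ 2 - 1)) ∂μ ≤ Real.exp (256 * subgM * t ^ 2) := by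
  obtain ⟨hI, hB⟩ := exp_sq_bound μ W hW hi hb
  have hR1 : Integrable (fun ω => 1 + t * (W ω ^ 2 - 1)) μ :=
    (integrable_const _).add ((h2i.sub (integrable_const _)).const_mul t)
  have hR2 : Integrable (fun ω => 256 * t ^ 2 * Real.exp (W ω ^ 2 / 4)) μ := hI.const_mul _
  have hE : Integrable (fun ω => Real.exp (t * (W ω ^ 2 - 1))) μ := by
    refine (hR1.add hR2).mono' (by fun_prop) (ae_of_all _ fun ω => ?_)
    rw [Real.norm_eq_abs, abs_of_pos (Real.exp_pos _)]
    exact exp_scalar t (W ω) ht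
  refine ⟨hE, ?_⟩
  calc ∫ ω, Real.exp (t * (W ω ^ 2 - 1)) ∂μ
      ≤ ∫ ω, ((1 + t * (W ω ^ 2 - 1)) + 256 * t ^ 2 * Real.exp (W ω ^ 2 / 4)) ∂μ :=
        integral_mono hE (hR1.add hR2) fun ω => exp_scalar t (W ω) ht
    _ = 1 + 256 * t ^ 2 * ∫ ω, Real.exp (W ω ^ 2 / 4) ∂μ := by
        have hs : Integrable (fun ω => W ω ^ 2 - 1) μ := h2i.sub (integrable_const _)
        have hs2 : ∫ ω, (W ω ^ 2 - 1) ∂μ = 0 := by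
          rw [integral_sub h2i (integrable_const _), h2]; simp
        rw [integral_add hR1 hR2, integral_const_mul, integral_add (integrable_const _)
          (hs.const_mul t), integral_const_mul, hs2]
        simp
    _ ≤ 1 + 256 * t ^ 2 * subgM := by gcongr
    _ ≤ Real.exp (256 * subgM * t ^ 2) := by
        have := Real.add_one_le_exp (256 * subgM * t ^ 2)
        linarith

lemma exists_net (n : ℕ) : ∃ s : Finset (EuclideanSpace ℝ (Fin n)),
    s.card ≤ 5 ^ n ∧ (∀ v ∈ s, ‖v‖ = 1) ∧
    ∀ x : EuclideanSpace ℝ (Fin n), ‖x‖ = 1 → ∃ v ∈ s, ‖x - v‖ < 1 / 2 := by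
  classical
  let P : ℕ → Prop := fun k => ∃ s : Finset (EuclideanSpace ℝ (Fin n)), s.card = k ∧
    (∀ v ∈ s, ‖v‖ = 1) ∧ ∀ v ∈ s, ∀ w ∈ s, v ≠ w → 1 / 2 ≤ ‖v - w‖
  have hbd : ∀ k, P k → k ≤ 5 ^ n := by
    rintro k ⟨s, rfl, h1, h2⟩
    have hinj : Function.Injective (fun v : EuclideanSpace ℝ (Fin n) => (2 : ℝ) • v) :=
      smul_right_injective _ (by norm_num)
    have := Besicovitch.card_le_of_separated (s.image fun v => (2 : ℝ) • v) ?_ ?_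
    · rw [Finset.card_image_of_injective _ hinj] at this
      simpa using this
    · intro c hc
      obtain ⟨v, hv, rfl⟩ := Finset.mem_image.1 hc
      rw [norm_smul, h1 v hv]; norm_num
    · intro c hc d hd hcd
      obtain ⟨v, hv, rfl⟩ := Finset.mem_image.1 hc
      obtain ⟨w, hw, rfl⟩ := Finset.mem_image.1 hd
      rw [← smul_sub, norm_smul]
      have := h2 v hv w hw (fun h => hcd (by rw [h]))
      norm_num
      linarith
  have h0 : P 0 := ⟨∅, by simp, by simp, by simp⟩
  obtain ⟨s, hs, h1, h2⟩ := Nat.findGreatest_spec (P := P) (Nat.zero_le (5 ^ n)) h0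
  refine ⟨s, hs ▸ Nat.findGreatest_le _, h1, fun x hx => ?_⟩
  by_contra! hc
  have hxs : x ∉ s := fun h => by
    have := hc x h
    norm_num at this
  have hP : P (s.card + 1) := by
    refine ⟨insert x s, Finset.card_insert_of_notMem hxs, ?_, ?_⟩
    · intro v hv
      rcases Finset.mem_insert.1 hv with rfl | hv
      · exact hx
      · exact h1 v hv
    · intro v hv w hw hvw
      rcases Finset.mem_insert.1 hv with rfl | hv' <;> rcases Finset.mem_insert.1 hw with rfl | hw'
      · exact absurd rfl hvw
      · exact hc w hw'
      · rw [norm_sub_rev]; exact hc v hv'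
      · exact h2 v hv' w hw' hvw
  have := Nat.le_findGreatest (hbd _ hP) hP
  omega

lemma norm_le_of_net_s5 {n : ℕ} (s : Finset (EuclideanSpace ℝ (Fin n)))
    (h1 : ∀ v ∈ s, ‖v‖ = 1)
    (h2 : ∀ x : EuclideanSpace ℝ (Fin n), ‖x‖ = 1 → ∃ v ∈ s, ‖x - v‖ < 1 / 2)
    (T : EuclideanSpace ℝ (Fin n) →L[ℝ] EuclideanSpace ℝ (Fin n))
    (hT : (T : EuclideanSpace ℝ (Fin n) →ₗ[ℝ] EuclideanSpace ℝ (Fin n)).IsSymmetric) (m : ℝ)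
    (hm0 : 0 ≤ m) (hm : ∀ v ∈ s, |inner ℝ (T v) v| ≤ m) : ‖T‖ ≤ 32 * m := by
  have hsph : ∀ x : EuclideanSpace ℝ (Fin n), ‖x‖ = 1 →
      |inner ℝ (T x) x| ≤ m + 31 / 32 * ‖T‖ := by
    intro x hx
    obtain ⟨v, hv, hxv⟩ := h2 x hx
    have hv1 := h1 v hv
    have e : inner ℝ (T x) x = inner ℝ (T v) v + inner ℝ (T (x - v)) (x + v) := by
      have := hT x v
      simp only [ContinuousLinearMap.coe_coe] at this
      rw [map_sub, inner_sub_left, inner_add_right, inner_add_right, this, real_inner_comm (T v) x]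
      ring
    have h3 : |inner ℝ (T (x - v)) (x + v)| ≤ ‖T‖ * (‖x - v‖ * ‖x + v‖) := by
      calc _ ≤ ‖T (x - v)‖ * ‖x + v‖ := abs_real_inner_le_norm _ _
        _ ≤ (‖T‖ * ‖x - v‖) * ‖x + v‖ := by gcongr; exact T.le_opNorm _
        _ = _ := by ring
    have h4 : ‖x - v‖ * ‖x + v‖ ≤ 31 / 32 := by
      have hp := parallelogram_law_with_norm ℝ x v
      rw [hx, hv1] at hp
      set a := ‖x - v‖ with ha
      set b := ‖x + v‖ with hb
      have ha0 : 0 ≤ a := norm_nonneg _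
      have hb0 : 0 ≤ b := norm_nonneg _
      have hb2 : b ^ 2 = 4 - a ^ 2 := by nlinarith
      have ha2 : a ^ 2 ≤ 1 / 4 := by nlinarith
      have : (a * b) ^ 2 ≤ (31 / 32) ^ 2 := by
        rw [mul_pow, hb2]; nlinarith
      exact abs_le_of_sq_le_sq' this (by norm_num) |>.2
    have h5 : ‖T‖ * (‖x - v‖ * ‖x + v‖) ≤ ‖T‖ * (31 / 32) := by gcongr
    rw [e]
    calc _ ≤ |inner ℝ (T v) v| + |inner ℝ (T (x - v)) (x + v)| := abs_add_le _ _
      _ ≤ m + 31 / 32 * ‖T‖ := by linarith [hm v hv]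
  have hR : ‖T‖ ≤ m + 31 / 32 * ‖T‖ := by
    conv_lhs => rw [ContinuousLinearMap.norm_eq_iSup_rayleighQuotient T hT]
    refine ciSup_le fun x => ?_
    by_cases hx : x = 0
    · subst hx
      simp [ContinuousLinearMap.rayleighQuotient]
      positivity
    · have hnx : ‖x‖ ≠ 0 := norm_ne_zero_iff.2 hx
      have hu : ‖(‖x‖⁻¹ • x)‖ = 1 := by
        rw [norm_smul, norm_inv, norm_norm, inv_mul_cancel₀ hnx]
      have := hsph _ hu
      refine le_of_eq_of_le (congrArg abs ?_) this
      change T.reApplyInnerSelf x / ‖x‖ ^ 2 = _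
      rw [ContinuousLinearMap.reApplyInnerSelf_apply,
        map_smul, real_inner_smul_left, real_inner_smul_right]
      simp only [RCLike.re_to_real]
      field_simp
  linarith

lemma inv_bound {n : ℕ} (hn : 0 < n) (K : Matrix (Fin n) (Fin n) ℝ) (S : ℝ) (hS : 0 < S)
    (e : ℝ) (hK : ‖K - S • (1 : Matrix (Fin n) (Fin n) ℝ)‖ ≤ S * e) (he : e ≤ 1 / 2) :
    IsUnit K.det ∧ ‖K⁻¹ - S⁻¹ • (1 : Matrix (Fin n) (Fin n) ℝ)‖ ≤ 2 * e / S := by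
  have : Nonempty (Fin n) := ⟨⟨0, hn⟩⟩
  have hSne := hS.ne'
  have h1 : ‖(1 : Matrix (Fin n) (Fin n) ℝ) - S⁻¹ • K‖ < 1 := by
    have : (1 : Matrix (Fin n) (Fin n) ℝ) - S⁻¹ • K =
        (-S⁻¹) • (K - S • (1 : Matrix (Fin n) (Fin n) ℝ)) := by
      rw [smul_sub, smul_smul]
      simp [hSne]
      abel
    rw [this, norm_smul, norm_neg, norm_inv, Real.norm_of_nonneg hS.le]
    calc S⁻¹ * ‖K - S • (1 : Matrix (Fin n) (Fin n) ℝ)‖ ≤ S⁻¹ * (S * e) := by gcongr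
      _ = e := by field_simp
      _ < 1 := by linarith
  have hu : IsUnit (S⁻¹ • K) := by
    have := isUnit_one_sub_of_norm_lt_one h1
    simpa using this
  have hKu : IsUnit K := by
    have h : K = S • (S⁻¹ • K) := by rw [smul_smul, mul_inv_cancel₀ hSne, one_smul]
    rw [h]
    exact (IsUnit.smul (Units.mk0 S hSne) hu)
  have hdet : IsUnit K.det := (Matrix.isUnit_iff_isUnit_det K).1 hKu
  refine ⟨hdet, ?_⟩
  set E := K - S • (1 : Matrix (Fin n) (Fin n) ℝ) with hE
  have hid : K⁻¹ - S⁻¹ • (1 : Matrix (Fin n) (Fin n) ℝ) = (-S⁻¹) • (K⁻¹ * E) := by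
    rw [hE, mul_sub, Matrix.nonsing_inv_mul _ hdet, mul_smul_comm, mul_one, smul_sub, smul_smul]
    simp [hSne]
    abel
  have hb : ‖K⁻¹ - S⁻¹ • (1 : Matrix (Fin n) (Fin n) ℝ)‖ ≤ ‖K⁻¹‖ * e := by
    rw [hid, norm_smul, norm_neg, norm_inv, Real.norm_of_nonneg hS.le]
    calc S⁻¹ * ‖K⁻¹ * E‖ ≤ S⁻¹ * (‖K⁻¹‖ * (S * e)) := by
          gcongr
          exact (norm_mul_le _ _).trans (by gcongr)
      _ = _ := by field_simp
  have h1n : ‖S⁻¹ • (1 : Matrix (Fin n) (Fin n) ℝ)‖ = S⁻¹ := by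
    rw [norm_smul, norm_inv, Real.norm_of_nonneg hS.le, norm_one, mul_one]
  have hKi : ‖K⁻¹‖ ≤ 2 * S⁻¹ := by
    have h3 : ‖K⁻¹‖ ≤ ‖K⁻¹ - S⁻¹ • (1 : Matrix (Fin n) (Fin n) ℝ)‖ +
        ‖S⁻¹ • (1 : Matrix (Fin n) (Fin n) ℝ)‖ := by
      simpa using norm_add_le (K⁻¹ - S⁻¹ • (1 : Matrix (Fin n) (Fin n) ℝ)) (S⁻¹ • 1)
    have h4 : ‖K⁻¹‖ * e ≤ ‖K⁻¹‖ * (1 / 2) := by gcongr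
    linarith
  have he0 : 0 ≤ e := by
    have := (norm_nonneg E).trans hK
    exact nonneg_of_mul_nonneg_right this hS
  calc _ ≤ ‖K⁻¹‖ * e := hb
    _ ≤ (2 * S⁻¹) * e := by gcongr
    _ = 2 * e / S := by field_simp

lemma block_indep {Ω : Type*} [MeasurableSpace Ω] (μ : Measure Ω) [IsProbabilityMeasure μ]
    {ι κ : Type*} (X : ι → κ → Ω → ℝ) (hX : ∀ i j, Measurable (X i j))
    (h : iIndepFun (fun (p : ι × κ) => X p.1 p.2) μ) :
    iIndepFun (fun i ω => (fun j => X i j ω)) μ := by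
  have hp : ∀ i j, IsProbabilityMeasure (μ.map (X i j)) :=
    fun i j => Measure.isProbabilityMeasure_map (hX i j).aemeasurable
  have h2 : ∀ i, iIndepFun (X i) μ := fun i =>
    h.precomp (g := fun j => (i, j)) (fun a b hab => by simpa using hab)
  rw [iIndepFun_iff_map_fun_eq_infinitePi_map (by fun_prop)] at h ⊢
  have e : (fun ω i j => X i j ω) =
      (MeasurableEquiv.curry ι κ ℝ) ∘ (fun ω (p : ι × κ) => X p.1 p.2 ω) := by
    ext; simp
  rw [e, ← Measure.map_map (by fun_prop) (by fun_prop), h,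
    Measure.infinitePi_map_curry (fun i j => μ.map (X i j))]
  congr 1
  ext1 i
  rw [(iIndepFun_iff_map_fun_eq_infinitePi_map (by fun_prop)).1 (h2 i)]

section Sample

variable {Ω : Type*} [MeasurableSpace Ω] {μ : Measure Ω} [IsProbabilityMeasure μ]
  {n d : ℕ} {lam : Fin d → ℝ} {Z X : Ω → Matrix (Fin n) (Fin d) ℝ} {y : Fin n → ℝ}

/-- Projection of column `j` of `Z` on `v`. -/
def colProj (Z : Ω → Matrix (Fin n) (Fin d) ℝ) (v : EuclideanSpace ℝ (Fin n)) (j : Fin d) (ω : Ω) :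
    ℝ := ∑ i, v i * Z ω i j

/-- The centred quadratic form. -/
def quadForm (lam : Fin d → ℝ) (Z : Ω → Matrix (Fin n) (Fin d) ℝ)
    (v : EuclideanSpace ℝ (Fin n)) (ω : Ω) : ℝ :=
  ∑ j, lam j * (colProj Z v j ω ^ 2 - 1)

lemma colProj_meas (h : IsAnisoSample μ lam Z X y) (v : EuclideanSpace ℝ (Fin n)) (j : Fin d) :
    Measurable (colProj Z v j) := by
  unfold colProj
  exact Finset.measurable_sum _ fun i _ => (h.meas i j).const_mul _

lemma colProj_indep (h : IsAnisoSample μ lam Z X y) (v : EuclideanSpace ℝ (Fin n)) :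
    iIndepFun (fun j => colProj Z v j) μ := by
  have h1 : iIndepFun (fun (p : Fin d × Fin n) ω => Z ω p.2 p.1) μ :=
    h.indep.precomp (g := Prod.swap) Prod.swap_injective
  have h2 := block_indep μ (fun j i ω => Z ω i j) (fun j i => h.meas i j) h1
  exact h2.comp (fun _ z => ∑ i, v i * z i) (fun _ => by fun_prop)

lemma entry_indep (h : IsAnisoSample μ lam Z X y) (v : EuclideanSpace ℝ (Fin n)) (j : Fin d) :
    iIndepFun (fun i ω => v i * Z ω i j) μ := by
  have h1 : iIndepFun (fun i ω => Z ω i j) μ :=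
    h.indep.precomp (g := fun i => (i, j)) (fun a b hab => by simpa using hab)
  exact h1.comp (fun i z => v i * z) (fun _ => by fun_prop)

lemma entry_subg (h : IsAnisoSample μ lam Z X y) (i : Fin n) (j : Fin d) :
    HasSubgaussianMGF (fun ω => Z ω i j) 1 μ :=
  ⟨h.subg_int i j, fun t => by simpa [mgf] using h.subg i j t⟩

lemma colProj_subg (h : IsAnisoSample μ lam Z X y) (v : EuclideanSpace ℝ (Fin n)) (hv : ‖v‖ = 1)
    (j : Fin d) : HasSubgaussianMGF (colProj Z v j) 1 μ := by
  have := HasSubgaussianMGF.sum_of_iIndepFun (entry_indep h v j) (s := Finset.univ)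
    (fun i _ => (entry_subg h i j).const_mul (v i))
  convert this using 1
  · rfl
  rw [EuclideanSpace.norm_eq, Real.sqrt_eq_one] at hv
  apply NNReal.eq
  push_cast
  simp only [Real.norm_eq_abs, sq_abs] at hv
  rw [← hv]
  refine Finset.sum_congr rfl fun i _ => ?_
  exact (mul_one (v i ^ 2)).symm

lemma colProj_sq (h : IsAnisoSample μ lam Z X y) (v : EuclideanSpace ℝ (Fin n)) (hv : ‖v‖ = 1)
    (j : Fin d) : ∫ ω, colProj Z v j ω ^ 2 ∂μ = 1 := by
  have hm : ∀ i, MemLp (fun ω => v i * Z ω i j) 2 μ := fun i =>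
    ((entry_subg h i j).memLp 2).const_mul (v i)
  have hmean : ∀ i, ∫ ω, v i * Z ω i j ∂μ = 0 := fun i => by
    rw [integral_const_mul, h.mean_zero, mul_zero]
  have hsum : (∑ i, fun ω => v i * Z ω i j) = colProj Z v j := by
    ext ω; simp [colProj]
  have hvar := IndepFun.variance_sum (μ := μ) (X := fun i ω => v i * Z ω i j) (s := Finset.univ)
    (fun i _ => hm i) (fun a _ b _ hab => (entry_indep h v j).indepFun hab)
  rw [hsum] at hvar
  have h0 : ∫ ω, colProj Z v j ω ∂μ = 0 := by
    unfold colProj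
    rw [integral_finsetSum _ (fun i _ => (hm i).integrable (by norm_num))]
    simp [hmean]
  rw [variance_of_integral_eq_zero (colProj_meas h v j).aemeasurable h0] at hvar
  rw [EuclideanSpace.norm_eq, Real.sqrt_eq_one] at hv
  simp only [Real.norm_eq_abs, sq_abs] at hv
  rw [hvar, ← hv]
  refine Finset.sum_congr rfl fun i _ => ?_
  rw [variance_of_integral_eq_zero (hm i).aemeasurable (hmean i)]
  simp only [mul_pow]
  rw [integral_const_mul, h.var_one, mul_one]

lemma quadForm_mgf (h : IsAnisoSample μ lam Z X y) (v : EuclideanSpace ℝ (Fin n)) (hv : ‖v‖ = 1)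
    (L : ℝ) (hL : ∀ j, lam j ≤ L) (t : ℝ) (ht : |t| * L ≤ 1 / 8) :
    Integrable (fun ω => Real.exp (t * quadForm lam Z v ω)) μ ∧
      mgf (quadForm lam Z v) μ t ≤ Real.exp (256 * subgM * t ^ 2 * ∑ j, lam j ^ 2) := by
  have hind : iIndepFun (fun j ω => lam j * (colProj Z v j ω ^ 2 - 1)) μ :=
    (colProj_indep h v).comp (fun j w => lam j * (w ^ 2 - 1)) (fun _ => by fun_prop)
  have hmeas : ∀ j, Measurable (fun ω => lam j * (colProj Z v j ω ^ 2 - 1)) := fun j => by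
    have := colProj_meas h v j
    fun_prop
  have hb : ∀ j, Integrable (fun ω => Real.exp (t * lam j * (colProj Z v j ω ^ 2 - 1))) μ ∧
      ∫ ω, Real.exp (t * lam j * (colProj Z v j ω ^ 2 - 1)) ∂μ ≤
        Real.exp (256 * subgM * (t * lam j) ^ 2) := fun j => by
    have hs := colProj_subg h v hv j
    refine mgf_sq_bound μ _ (colProj_meas h v j) hs.integrable_exp_mul
      (fun t => by simpa [mgf] using hs.mgf_le t) (hs.memLp 2).integrable_sq
      (colProj_sq h v hv j) _ ?_
    rw [abs_mul, abs_of_pos (h.lam_pos j)]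
    exact (mul_le_mul_of_nonneg_left (hL j) (abs_nonneg t)).trans ht
  have hsum : (∑ j, fun ω => lam j * (colProj Z v j ω ^ 2 - 1)) = quadForm lam Z v := by
    ext ω; simp [quadForm]
  constructor
  · have := hind.integrable_exp_mul_sum hmeas (s := Finset.univ) (t := t)
      (fun j _ => by simpa only [mul_assoc] using (hb j).1)
    rwa [hsum] at this
  · have := hind.mgf_sum hmeas (t := t) Finset.univ
    rw [hsum] at this
    rw [this, Finset.mul_sum, Real.exp_sum]
    refine Finset.prod_le_prod (fun j _ => mgf_nonneg) fun j _ => ?_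
    have h2 := (hb j).2
    simp only [mgf, ← mul_assoc]
    refine h2.trans_eq ?_
    congr 1; ring

/-- The constant of the deviation bound. -/
def devC : ℝ := 8 * (256 * subgM + 4)

lemma devC_pos : 0 < devC := by have := subgM_nonneg; unfold devC; positivity

lemma exists_t (V Λ L : ℝ) (hV : 0 < V) (hΛ : 0 < Λ) (hL : 0 < L) :
    ∃ t : ℝ, 0 ≤ t ∧ t * Λ ≤ 1 / 8 ∧
      -t * (devC * (Real.sqrt (L * V) + L * Λ)) + 256 * subgM * t ^ 2 * V ≤ -(4 * L) := by
  have hM := subgM_nonneg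
  have hsq : Real.sqrt (L * V) ^ 2 = L * V := Real.sq_sqrt (by positivity)
  have hr0 : 0 < Real.sqrt (L * V) := Real.sqrt_pos.2 (by positivity)
  set r := Real.sqrt (L * V) with hr
  have key : ∀ t : ℝ, 0 ≤ t → t * V ≤ r → L ≤ 8 * (t * (r + L * Λ)) → 
      -t * (devC * (r + L * Λ)) + 256 * subgM * t ^ 2 * V ≤ -(4 * L) := by
    intro t ht h1 h2
    have h3 : t ^ 2 * V ≤ L := by
      have : (t * V) ^ 2 ≤ L * V := by rw [← hsq]; gcongr
      have h4 : t ^ 2 * V * V ≤ L * V := by linarith [this, (by ring : (t*V)^2 = t^2*V*V)]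
      exact le_of_mul_le_mul_right h4 hV
    have h5 : (256 * subgM + 4) * L ≤ (256 * subgM + 4) * (8 * (t * (r + L * Λ))) := by gcongr
    have h6 : 256 * subgM * (t ^ 2 * V) ≤ 256 * subgM * L := by gcongr
    unfold devC
    linarith
  by_cases hc : r / V * Λ ≤ 1 / 8
  · refine ⟨r / V, by positivity, hc, key _ (by positivity) (by field_simp; rfl) ?_⟩
    have : r / V * r = L := by field_simp; linarith
    have h2 : 0 ≤ r / V * (L * Λ) := by positivity
    nlinarith
  · push Not at hc
    refine ⟨1 / (8 * Λ), by positivity, by field_simp; rfl, key _ (by positivity) ?_ ?_⟩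
    · have : V < 8 * Λ * r := by
        have := mul_lt_mul_of_pos_right hc hV
        have e : r / V * Λ * V = r * Λ := by field_simp
        rw [e] at this
        linarith
      rw [div_mul_eq_mul_div, div_le_iff₀ (by positivity)]
      linarith
    · have : 8 * (1 / (8 * Λ) * (r + L * Λ)) = r / Λ + L := by field_simp
      rw [this]
      have : 0 < r / Λ := by positivity
      linarith

lemma quadForm_tail (h : IsAnisoSample μ lam Z X y) (v : EuclideanSpace ℝ (Fin n)) (hv : ‖v‖ = 1)
    (Λ : ℝ) (hΛ : ∀ j, lam j ≤ Λ) (hΛ0 : 0 < Λ) (hV : 0 < ∑ j, lam j ^ 2) (L : ℝ) (hL : 0 < L) :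
    μ.real {ω | devC * (Real.sqrt (L * ∑ j, lam j ^ 2) + L * Λ) ≤ |quadForm lam Z v ω|} ≤
      2 * Real.exp (-(4 * L)) := by
  obtain ⟨t, ht0, ht1, ht2⟩ := exists_t _ Λ L hV hΛ0 hL
  set s := devC * (Real.sqrt (L * ∑ j, lam j ^ 2) + L * Λ)
  obtain ⟨i1, b1⟩ := quadForm_mgf h v hv Λ hΛ t (by rwa [abs_of_nonneg ht0])
  obtain ⟨i2, b2⟩ := quadForm_mgf h v hv Λ hΛ (-t) (by rwa [abs_neg, abs_of_nonneg ht0])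
  have c1 : μ.real {ω | s ≤ quadForm lam Z v ω} ≤ Real.exp (-(4 * L)) := by
    refine (measure_ge_le_exp_mul_mgf s ht0 i1).trans ?_
    refine (mul_le_mul_of_nonneg_left b1 (Real.exp_pos _).le).trans ?_
    rw [← Real.exp_add]
    exact Real.exp_le_exp.2 ht2
  have c2 : μ.real {ω | quadForm lam Z v ω ≤ -s} ≤ Real.exp (-(4 * L)) := by
    refine (measure_le_le_exp_mul_mgf (-s) (by linarith : -t ≤ 0) i2).trans ?_
    refine (mul_le_mul_of_nonneg_left b2 (Real.exp_pos _).le).trans ?_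
    rw [← Real.exp_add]
    refine Real.exp_le_exp.2 (le_trans (le_of_eq ?_) ht2)
    ring
  calc _ ≤ μ.real ({ω | s ≤ quadForm lam Z v ω} ∪ {ω | quadForm lam Z v ω ≤ -s}) := by
        refine measureReal_mono ?_
        intro ω hω
        rcases le_abs.1 (show s ≤ |quadForm lam Z v ω| from hω) with h1 | h1
        · exact Or.inl h1
        · exact Or.inr (show quadForm lam Z v ω ≤ -s by linarith)
    _ ≤ _ := measureReal_union_le _ _
    _ ≤ _ := by linarith

lemma quadForm_eq (h : IsAnisoSample μ lam Z X y) (v : EuclideanSpace ℝ (Fin n)) (hv : ‖v‖ = 1)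
    (ω : Ω) : inner ℝ (toEuclideanCLM (n := Fin n) (𝕜 := ℝ)
      (X ω * (X ω)ᵀ - (∑ j, lam j) • (1 : Matrix (Fin n) (Fin n) ℝ)) v) v = quadForm lam Z v ω := by
  have hx : ∀ j, ((X ω)ᵀ *ᵥ v.ofLp) j = Real.sqrt (lam j) * colProj Z v j ω := by
    intro j
    simp only [Matrix.mulVec, dotProduct, Matrix.transpose_apply, h.X_eq, colProj, Finset.mul_sum]
    exact Finset.sum_congr rfl fun i _ => by ring
  have h1 : inner ℝ (toEuclideanCLM (n := Fin n) (𝕜 := ℝ) (X ω * (X ω)ᵀ) v) v =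
      ∑ j, lam j * colProj Z v j ω ^ 2 := by
    rw [real_inner_comm, EuclideanSpace.inner_eq_star_dotProduct]
    simp only [Matrix.ofLp_toEuclideanCLM, star_trivial]
    rw [← Matrix.mulVec_mulVec, dotProduct_comm, Matrix.dotProduct_mulVec, ← Matrix.mulVec_transpose]
    simp only [dotProduct, hx]
    refine Finset.sum_congr rfl fun j _ => ?_
    have := Real.mul_self_sqrt (h.lam_pos j).le
    linear_combination (colProj Z v j ω ^ 2) * this
  rw [map_sub, map_smul, map_one, _root_.sub_apply, inner_sub_left, h1]
  simp only [_root_.smul_apply, one_apply_eq_self, real_inner_smul_left]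
  rw [real_inner_self_eq_norm_sq, hv]
  simp [quadForm, mul_sub]

end Sample

/-- If `d∞ ≳ n + log(1/δ)`, then with probability `1 − δ` the Gram matrix `K = X Xᵀ` is
invertible and `K⁻¹` concentrates around `‖λ‖₁⁻¹ I` in ℓ₂ operator norm. -/
theorem stmt5 :
    ∃ c > (0 : ℝ), ∃ c₃ > (0 : ℝ),
      ∀ (Ω : Type*) (_ : MeasurableSpace Ω) (μ : Measure Ω), IsProbabilityMeasure μ →
      ∀ (n d : ℕ), 0 < n → 0 < d →
      ∀ (lam : Fin d → ℝ) (Z X : Ω → Matrix (Fin n) (Fin d) ℝ) (y : Fin n → ℝ),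
        IsAnisoSample μ lam Z X y →
      ∀ δ : ℝ, 0 < δ → δ < 1 / 2 →
        c₃ * (n + Real.log (1 / δ)) ≤ dimInf lam →
        ENNReal.ofReal (1 - δ) ≤
          μ {ω | IsUnit (X ω * (X ω)ᵀ).det ∧
              ‖(X ω * (X ω)ᵀ)⁻¹ - (∑ j, lam j)⁻¹ • (1 : Matrix (Fin n) (Fin n) ℝ)‖ ≤
                (c / ∑ j, lam j) *
                  (Real.sqrt ((n + Real.log (1 / δ)) / dim2 lam) +
                    (n + Real.log (1 / δ)) / dimInf lam)} := by
  have hC := devC_pos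
  have hC32 : 32 ≤ devC := by have := subgM_nonneg; unfold devC; linarith
  refine ⟨64 * devC, by positivity, (128 * devC) ^ 2, by positivity, ?_⟩
  intro Ω _ μ _ n d hn hd lam Z X y h δ hδ0 hδ2 hdim
  have : Nonempty (Fin d) := ⟨⟨0, hd⟩⟩
  set S := ∑ j, lam j with hS
  set V := ∑ j, lam j ^ 2 with hVdef
  set Λ := ⨆ j, lam j with hΛdef
  set L : ℝ := n + Real.log (1 / δ) with hLdef
  have hle : ∀ j, lam j ≤ Λ := fun j => le_ciSup (Set.finite_range lam).bddAbove j
  have hΛ0 : 0 < Λ := (h.lam_pos ⟨0, hd⟩).trans_le (hle _)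
  have hS0 : 0 < S := Finset.sum_pos (fun j _ => h.lam_pos j) Finset.univ_nonempty
  have hV0 : 0 < V := Finset.sum_pos (fun j _ => by have := h.lam_pos j; positivity)
    Finset.univ_nonempty
  have hlog : 0 < Real.log (1 / δ) := Real.log_pos (by rw [lt_div_iff₀ hδ0]; linarith)
  have hn1 : (1 : ℝ) ≤ n := by exact_mod_cast hn
  have hL0 : 0 < L := by positivity
  have hVS : V ≤ Λ * S := by
    rw [hVdef, hS, Finset.mul_sum]
    refine Finset.sum_le_sum fun j _ => ?_
    have := h.lam_pos j
    have := hle j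
    nlinarith
  have hdI : L / dimInf lam = L * Λ / S := by
    unfold dimInf; rw [← hS, ← hΛdef]; field_simp
  have hd2 : Real.sqrt (L / dim2 lam) = Real.sqrt (L * V) / S := by
    unfold dim2; rw [← hS, ← hVdef]
    rw [show L / (S ^ 2 / V) = L * V / S ^ 2 by field_simp, Real.sqrt_div (by positivity),
      Real.sqrt_sq hS0.le]
  have hdim' : (128 * devC) ^ 2 * (L * Λ) ≤ S := by
    have : dimInf lam = S / Λ := rfl
    rw [this, le_div_iff₀ hΛ0] at hdim
    linarith
  set dev := devC * (Real.sqrt (L * V) + L * Λ) with hdev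
  have hdev0 : 0 ≤ dev := by positivity
  set e : ℝ := 32 * dev / S with hedef
  have he : e ≤ 1 / 2 := by
    have h1 : 128 * devC * Real.sqrt (L * V) ≤ S := by
      have h2 : (128 * devC * Real.sqrt (L * V)) ^ 2 ≤ S ^ 2 := by
        rw [mul_pow, Real.sq_sqrt (by positivity)]
        calc (128 * devC) ^ 2 * (L * V) ≤ (128 * devC) ^ 2 * (L * (Λ * S)) := by gcongr
          _ = ((128 * devC) ^ 2 * (L * Λ)) * S := by ring
          _ ≤ S * S := by gcongr
          _ = S ^ 2 := by ring
      exact abs_le_of_sq_le_sq' h2 hS0.le |>.2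
    have h3 : 128 * devC * (L * Λ) ≤ S := by
      refine le_trans ?_ hdim'
      gcongr
      nlinarith
    rw [hedef, div_le_iff₀ hS0, hdev]
    linarith
  obtain ⟨net, hcard, hnet1, hnet2⟩ := exists_net n
  set B : Set Ω := ⋃ v ∈ net, {ω | dev ≤ |quadForm lam Z v ω|} with hB
  have hqm : ∀ v, Measurable (quadForm lam Z v) := fun v => by
    unfold quadForm
    have := fun j => colProj_meas h v j
    fun_prop
  have hBm : MeasurableSet B :=
    Finset.measurableSet_biUnion _ fun v _ => measurableSet_le measurable_const (hqm v).abs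
  have hBp : μ.real B ≤ δ := by
    have h1 : μ.real B ≤ ∑ v ∈ net, μ.real {ω | dev ≤ |quadForm lam Z v ω|} :=
      measureReal_biUnion_finset_le _ _
    have h2 : ∑ v ∈ net, μ.real {ω | dev ≤ |quadForm lam Z v ω|} ≤
        ∑ v ∈ net, 2 * Real.exp (-(4 * L)) :=
      Finset.sum_le_sum fun v hv => quadForm_tail h v (hnet1 v hv) Λ hle hΛ0 hV0 L hL0
    rw [Finset.sum_const, nsmul_eq_mul] at h2
    have h3 : (net.card : ℝ) ≤ 5 ^ n := by exact_mod_cast hcard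
    have h4 : (5 : ℝ) ^ n ≤ Real.exp (2 * n) := by
      rw [mul_comm, Real.exp_nat_mul]
      gcongr
      have := Real.exp_one_gt_d9
      rw [show (2 : ℝ) = 1 + 1 by norm_num, Real.exp_add]
      nlinarith
    have h5 : (2 : ℝ) ≤ Real.exp n := by
      have := Real.add_one_le_exp (n : ℝ); linarith
    have h6 : Real.exp (-Real.log (1 / δ)) = δ := by
      rw [one_div, Real.log_inv, neg_neg, Real.exp_log hδ0]
    calc μ.real B ≤ (net.card : ℝ) * (2 * Real.exp (-(4 * L))) := h1.trans h2
      _ ≤ Real.exp (2 * n) * (Real.exp n * Real.exp (-(4 * L))) := by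
          gcongr
          exact h3.trans h4
      _ = Real.exp (2 * n + (n + -(4 * L))) := by rw [Real.exp_add, Real.exp_add]
      _ ≤ Real.exp (-Real.log (1 / δ)) := by
          apply Real.exp_le_exp.2
          rw [hLdef]; linarith
      _ = δ := h6
  have hsub : Bᶜ ⊆ {ω | IsUnit (X ω * (X ω)ᵀ).det ∧
      ‖(X ω * (X ω)ᵀ)⁻¹ - S⁻¹ • (1 : Matrix (Fin n) (Fin n) ℝ)‖ ≤
        (64 * devC / S) * (Real.sqrt (L / dim2 lam) + L / dimInf lam)} := by
    intro ω hω
    have hq : ∀ v ∈ net, |quadForm lam Z v ω| ≤ dev := by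
      intro v hv
      by_contra hc
      push Not at hc
      exact hω (Set.mem_biUnion hv hc.le)
    set A := X ω * (X ω)ᵀ - S • (1 : Matrix (Fin n) (Fin n) ℝ) with hA
    have hAh : A.IsHermitian := by
      rw [hA, Matrix.IsHermitian, Matrix.conjTranspose_eq_transpose_of_trivial]
      simp [Matrix.transpose_sub, Matrix.transpose_mul, Matrix.transpose_smul]
    have hsym : ((toEuclideanCLM (n := Fin n) (𝕜 := ℝ) A : EuclideanSpace ℝ (Fin n) →L[ℝ]
        EuclideanSpace ℝ (Fin n)) : EuclideanSpace ℝ (Fin n) →ₗ[ℝ]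
        EuclideanSpace ℝ (Fin n)).IsSymmetric :=
      Matrix.isSymmetric_toEuclideanLin_iff.2 hAh
    have hnorm := norm_le_of_net_s5 net hnet1 hnet2 _ hsym dev hdev0 (fun v hv => by
      rw [hA, hS, quadForm_eq h v (hnet1 v hv) ω]; exact hq v hv)
    rw [Matrix.l2_opNorm_toEuclideanCLM] at hnorm
    obtain ⟨hu, hi⟩ := inv_bound hn (X ω * (X ω)ᵀ) S hS0 e
      (hnorm.trans_eq (by rw [hedef]; field_simp)) he
    refine ⟨hu, hi.trans_eq ?_⟩
    rw [hd2, hdI, hedef, hdev]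
    field_simp
    ring
  calc ENNReal.ofReal (1 - δ) ≤ ENNReal.ofReal (μ.real Bᶜ) := by
        apply ENNReal.ofReal_le_ofReal
        rw [probReal_compl_eq_one_sub hBm]
        linarith
    _ = μ Bᶜ := ofReal_measureReal
    _ ≤ _ := measure_mono hsub

end
end

section
/- There is a universal constant c > 0 such that the following holds. Let (X, y) be a λ-anisotropic subgaussian sample of size n in dimension d and let (x′, y′) be a λ-anisotropic subgaussian sample of size 1 in dimension d, independent of (X, y). Then for any δ ∈ (0, 1/2), with probability at least 1 − δ, (1/‖λ‖₁) |yᵀ X x′| ≤ c ( √(n log(1/δ) / d₂) + √n · log(1/δ) / d_∞ ). -/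
open MeasureTheory ProbabilityTheory Matrix

noncomputable section

open scoped NNReal ENNReal

/-- Gaussian integral of `exp (s x²)`. -/
lemma aux_gauss_sq (s : ℝ) (hs : 0 ≤ s) (hs' : s ≤ 1 / 4) :
    ∫⁻ x, ENNReal.ofReal (Real.exp (s * x ^ 2)) ∂(gaussianReal 0 1)
      ≤ ENNReal.ofReal (Real.exp (2 * s)) := by
  rw [gaussianReal_of_var_ne_zero _ one_ne_zero,
    lintegral_withDensity_eq_lintegral_mul _ (measurable_gaussianPDF _ _) (by fun_prop)]
  have hb : 0 < 1 / 2 - s := by linarith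
  have h1 : ∀ x : ℝ, (gaussianPDF 0 1 * fun x => ENNReal.ofReal (Real.exp (s * x ^ 2))) x
      = ENNReal.ofReal ((Real.sqrt (2 * Real.pi))⁻¹ * Real.exp (-(1 / 2 - s) * x ^ 2)) := by
    intro x
    simp only [Pi.mul_apply, gaussianPDF, gaussianPDFReal]
    rw [← ENNReal.ofReal_mul (by positivity), mul_assoc, ← Real.exp_add]
    simp only [NNReal.coe_one, mul_one, sub_zero]
    congr 3
    ring
  simp_rw [h1]
  rw [← ofReal_integral_eq_lintegral_ofReal
    ((integrable_exp_neg_mul_sq hb).const_mul _) (ae_of_all _ fun x => by positivity)]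
  apply ENNReal.ofReal_le_ofReal
  rw [integral_const_mul, integral_gaussian, ← Real.sqrt_inv, ← Real.sqrt_mul (by positivity)]
  apply Real.sqrt_le_iff.2
  refine ⟨by positivity, ?_⟩
  have h2 : (2 * Real.pi)⁻¹ * (Real.pi / (1 / 2 - s)) = 1 / (1 - 2 * s) := by
    have : 1 - 2 * s ≠ 0 := by linarith
    have : (1 - s * 2) ≠ 0 := by linarith
    field_simp
  rw [h2, ← Real.exp_nat_mul, div_le_iff₀ (by linarith)]
  have h3 := Real.add_one_le_exp (((2 : ℕ) : ℝ) * (2 * s))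
  push_cast at h3 ⊢
  nlinarith

lemma aux_lintegral_exp {Ω : Type*} [MeasurableSpace Ω] {μ : Measure Ω}
    {g : Ω → ℝ} {c : ℝ≥0} (hg : HasSubgaussianMGF g c μ) (t : ℝ) :
    ∫⁻ ω, ENNReal.ofReal (Real.exp (t * g ω)) ∂μ ≤ ENNReal.ofReal (Real.exp (c * t ^ 2 / 2)) := by
  rw [← ofReal_integral_eq_lintegral_ofReal (hg.integrable_exp_mul t)
    (ae_of_all _ fun x => by positivity)]
  exact ENNReal.ofReal_le_ofReal (hg.mgf_le t)

lemma aux_gauss_exp (a : ℝ) :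
    ∫⁻ x, ENNReal.ofReal (Real.exp (a * x)) ∂(gaussianReal 0 1)
      = ENNReal.ofReal (Real.exp (a ^ 2 / 2)) := by
  rw [← ofReal_integral_eq_lintegral_ofReal (integrable_exp_mul_gaussianReal a)
    (ae_of_all _ fun x => by positivity)]
  have := congrFun (mgf_fun_id_gaussianReal (μ := 0) (v := 1)) a
  simp only [mgf] at this
  rw [this]
  simp

lemma aux_prod_lintegral {Ω : Type*} [MeasurableSpace Ω] {μ : Measure Ω} [IsProbabilityMeasure μ]
    {g w : Ω → ℝ} {c : ℝ≥0} (hgm : Measurable g) (hwm : Measurable w)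
    (hg : HasSubgaussianMGF g c μ) (hw : HasSubgaussianMGF w 1 μ) (hi : IndepFun g w μ)
    (t : ℝ) (ht : c * t ^ 2 ≤ 1 / 2) :
    ∫⁻ ω, ENNReal.ofReal (Real.exp (t * (g ω * w ω))) ∂μ
      ≤ ENNReal.ofReal (Real.exp (c * t ^ 2)) := by
  have hg' := (HasSubgaussianMGF.id_map_iff hgm.aemeasurable).2 hg
  have hw' := (HasSubgaussianMGF.id_map_iff hwm.aemeasurable).2 hw
  have : IsProbabilityMeasure (μ.map g) := Measure.isProbabilityMeasure_map hgm.aemeasurable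
  have : IsProbabilityMeasure (μ.map w) := Measure.isProbabilityMeasure_map hwm.aemeasurable
  have hmap := hi.map_prod_eq_prod_map_map hgm.aemeasurable hwm.aemeasurable
  calc ∫⁻ ω, ENNReal.ofReal (Real.exp (t * (g ω * w ω))) ∂μ
      = ∫⁻ p, ENNReal.ofReal (Real.exp (t * (p.1 * p.2))) ∂(μ.map fun ω => (g ω, w ω)) := by
        rw [lintegral_map (by fun_prop) (by fun_prop)]
    _ = ∫⁻ b, ∫⁻ a, ENNReal.ofReal (Real.exp (t * (a * b))) ∂(μ.map g) ∂(μ.map w) := by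
        rw [hmap, lintegral_prod_symm' _ (by fun_prop)]
    _ ≤ ∫⁻ b, ENNReal.ofReal (Real.exp (c * (t * b) ^ 2 / 2)) ∂(μ.map w) := by
        apply lintegral_mono
        intro b
        refine le_trans (le_of_eq ?_) (aux_lintegral_exp hg' (t * b))
        apply lintegral_congr
        intro a
        simp only [id]
        congr 2
        ring
    _ = ∫⁻ b, ∫⁻ x, ENNReal.ofReal (Real.exp ((Real.sqrt c * t * x) * b)) ∂(gaussianReal 0 1)
          ∂(μ.map w) := by
        apply lintegral_congr
        intro b
        have := aux_gauss_exp (Real.sqrt c * t * b)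
        rw [show (Real.sqrt c * t * b) ^ 2 = c * (t * b) ^ 2 by
          rw [mul_assoc, mul_pow, Real.sq_sqrt c.coe_nonneg]] at this
        rw [← this]
        apply lintegral_congr
        intro a
        congr 2
        ring
    _ = ∫⁻ x, ∫⁻ b, ENNReal.ofReal (Real.exp ((Real.sqrt c * t * x) * b)) ∂(μ.map w)
          ∂(gaussianReal 0 1) := by
        rw [lintegral_lintegral_swap]
        fun_prop
    _ ≤ ∫⁻ x, ENNReal.ofReal (Real.exp ((c * t ^ 2 / 2) * x ^ 2)) ∂(gaussianReal 0 1) := by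
        apply lintegral_mono
        intro x
        refine (aux_lintegral_exp hw' (Real.sqrt c * t * x)).trans (le_of_eq ?_)
        congr 2
        rw [mul_pow, mul_pow, Real.sq_sqrt c.coe_nonneg]
        simp
        ring
    _ ≤ _ := by
        refine (aux_gauss_sq _ (by positivity) (by linarith)).trans (le_of_eq ?_)
        congr 2
        ring

lemma aux_prod_mgf {Ω : Type*} [MeasurableSpace Ω] {μ : Measure Ω} [IsProbabilityMeasure μ]
    {g w : Ω → ℝ} {c : ℝ≥0} (hgm : Measurable g) (hwm : Measurable w)
    (hg : HasSubgaussianMGF g c μ) (hw : HasSubgaussianMGF w 1 μ) (hi : IndepFun g w μ)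
    (t : ℝ) (ht : c * t ^ 2 ≤ 1 / 2) :
    Integrable (fun ω => Real.exp (t * (g ω * w ω))) μ ∧
      ∫ ω, Real.exp (t * (g ω * w ω)) ∂μ ≤ Real.exp (c * t ^ 2) := by
  have h := aux_prod_lintegral hgm hwm hg hw hi t ht
  have hint : Integrable (fun ω => Real.exp (t * (g ω * w ω))) μ := by
    rw [← lintegral_ofReal_ne_top_iff_integrable (by fun_prop)
      (ae_of_all _ fun x => by positivity)]
    exact ne_top_of_le_ne_top ENNReal.ofReal_ne_top h
  refine ⟨hint, ?_⟩
  rw [← ofReal_integral_eq_lintegral_ofReal hint (ae_of_all _ fun x => by positivity)] at h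
  exact (ENNReal.ofReal_le_ofReal_iff (by positivity)).1 h

lemma aux_subg {Ω : Type*} [MeasurableSpace Ω] {μ : Measure Ω}
    {n d : ℕ} {lam : Fin d → ℝ} {Z W : Ω → Matrix (Fin n) (Fin d) ℝ} {y : Fin n → ℝ}
    (h : IsAnisoSample μ lam Z W y) (i : Fin n) (j : Fin d) (a : ℝ) (ha : a ^ 2 = 1) :
    HasSubgaussianMGF (fun ω => a * Z ω i j) 1 μ where
  integrable_exp_mul t := by
    simpa [mul_assoc] using h.subg_int i j (t * a)
  mgf_le t := by
    have := h.subg i j (t * a)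
    simp only [mgf, ← mul_assoc]
    refine this.trans (le_of_eq ?_)
    rw [mul_pow, ha]
    simp

/-- One coordinate term. -/
lemma aux_col {Ω : Type*} [MeasurableSpace Ω] {μ : Measure Ω} [IsProbabilityMeasure μ]
    {n d : ℕ} {lam : Fin d → ℝ} {Z W : Ω → Matrix (Fin (n + 1)) (Fin d) ℝ} {y : Fin (n + 1) → ℝ}
    (h : IsAnisoSample μ lam Z W y) (j : Fin d) (t : ℝ) (ht : n * t ^ 2 ≤ 1 / 2) :
    Integrable (fun ω => Real.exp (t * ((∑ i : Fin n, y i.castSucc * Z ω i.castSucc j)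
        * Z ω (Fin.last n) j))) μ ∧
      ∫ ω, Real.exp (t * ((∑ i : Fin n, y i.castSucc * Z ω i.castSucc j)
        * Z ω (Fin.last n) j)) ∂μ ≤ Real.exp (n * t ^ 2) := by
  have hm := h.meas
  have hy : ∀ i, y i ^ 2 = 1 := by
    intro i
    rcases h.labels i with h | h <;> rw [h] <;> norm_num
  have hcol : iIndepFun (fun (i : Fin (n + 1)) ω => y i * Z ω i j) μ := by
    have h1 := h.indep.precomp (g := fun i : Fin (n + 1) => (i, j))
      (fun a b hab => (Prod.mk.inj hab).1)
    exact h1.comp (fun i x => y i * x) (fun i => by fun_prop)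
  have hS : ∀ ω, ∑ i : Fin n, y i.castSucc * Z ω i.castSucc j
      = ∑ i ∈ Finset.univ.map Fin.castSuccEmb, y i * Z ω i j := by
    intro ω
    rw [Finset.sum_map]
    rfl
  have hsub : HasSubgaussianMGF (fun ω => ∑ i : Fin n, y i.castSucc * Z ω i.castSucc j)
      (n : ℝ≥0) μ := by
    have := HasSubgaussianMGF.sum_of_iIndepFun hcol (c := fun _ => 1)
      (s := Finset.univ.map Fin.castSuccEmb) (fun i _ => aux_subg h i j (y i) (hy i))
    simp_rw [hS]
    simpa using this
  have hlast : HasSubgaussianMGF (fun ω => Z ω (Fin.last n) j) 1 μ := by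
    simpa using aux_subg h (Fin.last n) j 1 (by norm_num)
  have hind : IndepFun (fun ω => ∑ i : Fin n, y i.castSucc * Z ω i.castSucc j)
      (fun ω => Z ω (Fin.last n) j) μ := by
    have h1 := hcol.indepFun_finsetSum_of_notMem (s := Finset.univ.map Fin.castSuccEmb)
      (i := Fin.last n) (fun i => by fun_prop) (by simp [Fin.castSucc_ne_last])
    have h2 := h1.comp (φ := id) (ψ := fun x => y (Fin.last n) * x) measurable_id (by fun_prop)
    convert h2 using 1
    · ext ω
      rw [hS ω]
      simp only [Function.comp, id, Finset.sum_apply]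
    · ext ω
      simp only [Function.comp]
      rw [← mul_assoc, ← pow_two, hy, one_mul]
  exact aux_prod_mgf (c := n) (by fun_prop) (by fun_prop) hsub hlast hind t (by simpa using ht)

lemma aux_sum {Ω : Type*} [MeasurableSpace Ω] {μ : Measure Ω} [IsProbabilityMeasure μ]
    {n d : ℕ} {lam : Fin d → ℝ} {Z W : Ω → Matrix (Fin (n + 1)) (Fin d) ℝ} {y : Fin (n + 1) → ℝ}
    (h : IsAnisoSample μ lam Z W y) (t : ℝ) (ht : ∀ j, n * (t * lam j) ^ 2 ≤ 1 / 2)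
    (s : Finset (Fin d)) :
    Integrable (fun ω => Real.exp (t * ∑ j ∈ s, lam j *
        ((∑ i : Fin n, y i.castSucc * Z ω i.castSucc j) * Z ω (Fin.last n) j))) μ ∧
      mgf (fun ω => ∑ j ∈ s, lam j *
        ((∑ i : Fin n, y i.castSucc * Z ω i.castSucc j) * Z ω (Fin.last n) j)) μ t
        ≤ Real.exp (t ^ 2 * (n * ∑ j ∈ s, lam j ^ 2)) := by
  have hm := h.meas
  induction s using Finset.induction_on with
  | empty => simp [mgf]
  | insert j s hj ih =>
    set F : Fin d → Ω → ℝ := fun j ω => lam j *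
        ((∑ i : Fin n, y i.castSucc * Z ω i.castSucc j) * Z ω (Fin.last n) j) with hF
    have hcol := aux_col h j (t * lam j) (ht j)
    have hFj : Integrable (fun ω => Real.exp (t * F j ω)) μ := by
      simpa only [hF, mul_assoc] using hcol.1
    have hFm : mgf (F j) μ t ≤ Real.exp (n * (t * lam j) ^ 2) := by
      simpa only [mgf, hF, mul_assoc] using hcol.2
    have hind : IndepFun (F j) (fun ω => ∑ j ∈ s, F j ω) μ := by
      have h1 := h.indep.indepFun_finset (Finset.univ ×ˢ {j}) (Finset.univ ×ˢ s)
        (by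
          rw [Finset.disjoint_left]
          rintro ⟨a, b⟩ h1 h2
          simp only [Finset.mem_product, Finset.mem_univ, true_and, Finset.mem_singleton] at h1 h2
          exact hj (h1 ▸ h2)) (fun p => hm p.1 p.2)
      have hφ : Measurable (fun u : ((Finset.univ ×ˢ {j} : Finset (Fin (n + 1) × Fin d)) → ℝ) =>
          lam j * ((∑ i : Fin n, y i.castSucc * u ⟨(i.castSucc, j), by simp⟩)
          * u ⟨(Fin.last n, j), by simp⟩)) := by fun_prop
      have hψ : Measurable (fun u : ((Finset.univ ×ˢ s : Finset (Fin (n + 1) × Fin d)) → ℝ) =>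
          ∑ k : s, lam k * ((∑ i : Fin n, y i.castSucc *
          u ⟨(i.castSucc, k.1), by simp⟩) * u ⟨(Fin.last n, k.1), by simp⟩)) := by fun_prop
      have h2 := h1.comp hφ hψ
      have e : (fun ω => ∑ j ∈ s, F j ω) = fun ω => ∑ k : s, F k ω := by
        ext ω
        exact (Finset.sum_coe_sort s (fun k => F k ω)).symm
      rw [e]
      exact h2
    have hadd : (fun ω => ∑ k ∈ insert j s, F k ω) = F j + fun ω => ∑ k ∈ s, F k ω := by
      ext ω
      simp [Finset.sum_insert hj]
    have ih1 : Integrable (fun ω => Real.exp (t * (fun ω => ∑ k ∈ s, F k ω) ω)) μ := ih.1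
    have hI := hind.integrable_exp_mul_add hFj ih1
    constructor
    · rw [← hadd] at hI
      exact hI
    · change mgf (fun ω => ∑ k ∈ insert j s, F k ω) μ t ≤ _
      rw [hadd, hind.mgf_add hFj.aestronglyMeasurable ih1.aestronglyMeasurable,
        Finset.sum_insert hj]
      refine (mul_le_mul hFm ih.2 mgf_nonneg (Real.exp_nonneg _)).trans (le_of_eq ?_)
      rw [← Real.exp_add]
      congr 1
      ring

/-- Lemma 3 (e2): concentration of the leave-one-out term `‖λ‖₁⁻¹ |yᵀ X x′|`.  The joint
sample of size `n+1` consists of an independent pair of a size-`n` sample `X` (the first `n`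
rows) and a size-1 sample `x′` (the last row). -/
theorem stmt7 :
    ∃ c > (0 : ℝ),
      ∀ (Ω : Type*) (_ : MeasurableSpace Ω) (μ : Measure Ω), IsProbabilityMeasure μ →
      ∀ (n d : ℕ), 0 < n → 0 < d →
      ∀ (lam : Fin d → ℝ) (Z W : Ω → Matrix (Fin (n + 1)) (Fin d) ℝ) (y : Fin (n + 1) → ℝ),
        IsAnisoSample μ lam Z W y →
      ∀ δ : ℝ, 0 < δ → δ < 1 / 2 →
        ENNReal.ofReal (1 - δ) ≤
          μ {ω |
              let X : Matrix (Fin n) (Fin d) ℝ := (W ω).submatrix Fin.castSucc id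
              let x' : Fin d → ℝ := W ω (Fin.last n)
              (∑ j, lam j)⁻¹ * |(fun i : Fin n => y i.castSucc) ⬝ᵥ (X *ᵥ x')| ≤
                c * (Real.sqrt (n * Real.log (1 / δ) / dim2 lam) +
                      Real.sqrt n * Real.log (1 / δ) / dimInf lam)} := by


  refine ⟨5, by norm_num, ?_⟩
  intro Ω _ μ hμ n d hn hd lam Z W y h δ hδ hδ2
  have hlam := h.lam_pos
  haveI : Nonempty (Fin d) := ⟨⟨0, hd⟩⟩
  have hn' : (0 : ℝ) < n := by exact_mod_cast hn
  set Λ := ∑ j, lam j with hΛ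
  have hΛ0 : 0 < Λ := Finset.sum_pos (fun j _ => hlam j) Finset.univ_nonempty
  set Q := ∑ j, lam j ^ 2 with hQ
  have hQ0 : 0 < Q := Finset.sum_pos (fun j _ => pow_pos (hlam j) 2) Finset.univ_nonempty
  set M := ⨆ j, lam j with hM
  have hMle : ∀ j, lam j ≤ M := fun j => le_ciSup (Set.finite_range lam).bddAbove j
  have hM0 : 0 < M := (hlam ⟨0, hd⟩).trans_le (hMle _)
  set L := Real.log (1 / δ) with hL
  have hL0 : 0 < L := Real.log_pos (by rw [lt_div_iff₀ hδ]; linarith)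
  have hLexp : Real.exp (-L) = δ := by
    rw [hL, one_div, Real.log_inv, neg_neg, Real.exp_log hδ]
  set A := Real.sqrt (L * (n * Q)) with hA
  have hA0 : 0 < A := Real.sqrt_pos.2 (by positivity)
  have hA2 : A ^ 2 = L * (n * Q) := Real.sq_sqrt (by positivity)
  set R := Real.sqrt (2 * n) with hR
  have hR0 : 0 < R := Real.sqrt_pos.2 (by positivity)
  have hR2 : R ^ 2 = 2 * n := Real.sq_sqrt (by positivity)
  set D := A + L * (R * M) with hD
  have hD0 : 0 < D := by positivity
  set t := L / D with ht
  have ht0 : 0 < t := by positivity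
  have htD : t * D = L := div_mul_cancel₀ _ hD0.ne'
  have htA : t * A ≤ L := by
    rw [← htD]
    exact mul_le_mul_of_nonneg_left (by rw [hD]; linarith [show 0 < L * (R * M) by positivity])
      ht0.le
  have htB : t * (R * M) ≤ 1 := by
    have : t * (L * (R * M)) ≤ L := by
      rw [← htD]
      exact mul_le_mul_of_nonneg_left (by rw [htD, hD]; linarith) ht0.le
    by_contra hc
    push Not at hc
    nlinarith
  have htV : t ^ 2 * (n * Q) ≤ L := by
    have h1 : (t * A) ^ 2 ≤ L ^ 2 := pow_le_pow_left₀ (by positivity) htA 2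
    rw [mul_pow, hA2] at h1
    by_contra hc
    push Not at hc
    nlinarith
  have htl : ∀ j, n * (t * lam j) ^ 2 ≤ 1 / 2 := by
    intro j
    have h1 : (t * (R * M)) ^ 2 ≤ 1 := pow_le_one₀ (by positivity) htB
    have h2 : (t * lam j) ^ 2 ≤ (t * M) ^ 2 :=
      pow_le_pow_left₀ (mul_nonneg ht0.le (hlam j).le)
        (mul_le_mul_of_nonneg_left (hMle j) ht0.le) 2
    have h3 : (t * (R * M)) ^ 2 = 2 * n * (t * M) ^ 2 := by
      rw [← hR2]; ring
    rw [h3] at h1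
    nlinarith
  set S : Ω → ℝ := fun ω => ∑ j, lam j *
        ((∑ i : Fin n, y i.castSucc * Z ω i.castSucc j) * Z ω (Fin.last n) j) with hS
  have hpos := aux_sum h t htl Finset.univ
  have hneg := aux_sum h (-t) (fun j => by simpa [neg_mul] using htl j) Finset.univ
  have hb : ∀ m : ℝ, m ≤ Real.exp (t ^ 2 * (n * Q)) →
      Real.exp (-(3 * L)) * m ≤ δ / 2 := by
    intro m hm
    have h1 : Real.exp (-(3 * L)) * m ≤ Real.exp (-(3 * L)) * Real.exp L :=
      mul_le_mul_of_nonneg_left (hm.trans (Real.exp_le_exp.2 htV)) (Real.exp_nonneg _)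
    have h2 : Real.exp (-(3 * L)) * Real.exp L = δ * δ := by
      rw [← hLexp, ← Real.exp_add, ← Real.exp_add]
      congr 1
      ring
    nlinarith
  have hP1 : μ.real {ω | 3 * D ≤ S ω} ≤ δ / 2 := by
    refine (measure_ge_le_exp_mul_mgf (3 * D) ht0.le hpos.1).trans ?_
    rw [show -t * (3 * D) = -(3 * L) by rw [← htD]; ring]
    exact hb _ hpos.2
  have hP2 : μ.real {ω | S ω ≤ -(3 * D)} ≤ δ / 2 := by
    refine (measure_le_le_exp_mul_mgf (-(3 * D)) (neg_nonpos.2 ht0.le) hneg.1).trans ?_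
    rw [show - -t * -(3 * D) = -(3 * L) by rw [← htD]; ring]
    exact hb _ (by simpa using hneg.2)
  have hSeq : ∀ ω, (fun i : Fin n => y i.castSucc) ⬝ᵥ
      (((W ω).submatrix Fin.castSucc id) *ᵥ (W ω (Fin.last n))) = S ω := by
    intro ω
    simp only [dotProduct, mulVec, submatrix_apply, id, h.X_eq, hS, Finset.mul_sum,
      Finset.sum_mul]
    rw [Finset.sum_comm]
    refine Finset.sum_congr rfl fun j _ => Finset.sum_congr rfl fun i _ => ?_
    have := Real.mul_self_sqrt (hlam j).le
    calc _ = (Real.sqrt (lam j) * Real.sqrt (lam j)) *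
          (y i.castSucc * Z ω i.castSucc j * Z ω (Fin.last n) j) := by ring
      _ = _ := by rw [this]
  have hrhs : Λ⁻¹ * (3 * D) ≤ 5 * (Real.sqrt (n * L / dim2 lam) +
      Real.sqrt n * L / dimInf lam) := by
    have e1 : Real.sqrt (n * L / dim2 lam) = Λ⁻¹ * A := by
      have : n * L / dim2 lam = (Λ⁻¹ * A) ^ 2 := by
        rw [mul_pow, hA2]
        simp only [dim2]
        rw [← hΛ, ← hQ]
        field_simp
      rw [this, Real.sqrt_sq (by positivity)]
    have e2 : Real.sqrt n * L / dimInf lam = Λ⁻¹ * (L * (Real.sqrt n * M)) := by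
      simp only [dimInf]
      rw [← hΛ, ← hM]
      field_simp
    have e3 : 3 * R ≤ 5 * Real.sqrt n := by
      have h2 : Real.sqrt n ^ 2 = n := Real.sq_sqrt hn'.le
      refine (sq_le_sq₀ (by positivity) (by positivity)).1 ?_
      rw [mul_pow, mul_pow, hR2, h2]
      linarith
    rw [e1, e2, ← mul_add, mul_left_comm 5]
    apply mul_le_mul_of_nonneg_left _ (by positivity)
    have := mul_le_mul_of_nonneg_left e3 (show 0 ≤ L * M by positivity)
    rw [hD]
    nlinarith
  simp only [hSeq]
  set G := {ω | Λ⁻¹ * |S ω| ≤ 5 * (Real.sqrt (n * L / dim2 lam) +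
      Real.sqrt n * L / dimInf lam)} with hG
  have hcover : (Set.univ : Set Ω) ⊆ G ∪ ({ω | 3 * D ≤ S ω} ∪ {ω | S ω ≤ -(3 * D)}) := by
    intro ω _
    by_cases h1 : 3 * D ≤ S ω
    · exact Or.inr (Or.inl h1)
    by_cases h2 : S ω ≤ -(3 * D)
    · exact Or.inr (Or.inr h2)
    left
    push Not at h1 h2
    have h3 : |S ω| ≤ 3 * D := abs_le.2 ⟨h2.le, h1.le⟩
    exact (mul_le_mul_of_nonneg_left h3 (by positivity)).trans hrhs
  have hm : μ.real Set.univ ≤ μ.real G + (δ / 2 + δ / 2) :=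
    (measureReal_mono hcover).trans ((measureReal_union_le _ _).trans
      (add_le_add le_rfl ((measureReal_union_le _ _).trans (add_le_add hP1 hP2))))
  rw [probReal_univ] at hm
  apply ENNReal.ofReal_le_of_le_toReal
  change 1 - δ ≤ μ.real G
  linarith

end
end
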